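/- arXiv:1402.2085 — 6 statements merged into one kernel-verified Lean document; each statement's English description precedes it below -/
import Mathlib

section
/- The function h(λ) = 2·log((2 + √(λ² + 4))/λ) − √(λ² + 4) is strictly decreasing on the interval (0, ∞). -/
/-! No derivative is needed: `√(λ² + 4)` is strictly increasing on `(0, ∞)`, while
`(2 + √(λ² + 4)) / λ = 2 / λ + √(1 + 4 / λ²)` is strictly decreasing and positive there, so both
terms of `h` are strictly decreasing. -/

/-- The function `h(λ) = 2·log((2 + √(λ² + 4))/λ) − √(λ² + 4)` for `λ > 0`. -/
noncomputable def h (l : ℝ) : ℝ :=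
  2 * Real.log ((2 + Real.sqrt (l ^ 2 + 4)) / l) - Real.sqrt (l ^ 2 + 4)

/-- `h` is strictly decreasing on `(0, ∞)`. -/
theorem stmt0 : StrictAntiOn h (Set.Ioi (0 : ℝ)) := by
  intro a ha b hb hab
  have ha : 0 < a := ha
  have hb : 0 < b := hb
  have hsqrt : Real.sqrt (a ^ 2 + 4) < Real.sqrt (b ^ 2 + 4) :=
    Real.sqrt_lt_sqrt (by positivity) (by nlinarith)
  -- After squaring this reads `a² (b² + 4) < b² (a² + 4)`.
  have hcross : a * Real.sqrt (b ^ 2 + 4) < b * Real.sqrt (a ^ 2 + 4) := by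
    apply lt_of_pow_lt_pow_left₀ 2 (by positivity)
    rw [mul_pow, mul_pow, Real.sq_sqrt (by positivity), Real.sq_sqrt (by positivity)]
    nlinarith
  have hquot : (2 + Real.sqrt (b ^ 2 + 4)) / b < (2 + Real.sqrt (a ^ 2 + 4)) / a := by
    rw [div_lt_div_iff₀ hb ha]
    linarith
  have hlog := Real.log_lt_log (by positivity) hquot
  unfold h
  linarith
end

section
/- The function h maps (0, ∞) onto ℝ; in particular h(λ) → +∞ as λ → 0⁺, h(λ) → −∞ as λ → ∞, and there exists a unique λ₀ > 0 with h(λ₀) = 0. -/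
lemma h_strictAntiOn : StrictAntiOn h (Set.Ioi 0) := by
  intro a ha b hb hab
  have ha' : 0 < a := ha
  have hb' : 0 < b := hb
  have hs : √(a ^ 2 + 4) < √(b ^ 2 + 4) :=
    Real.sqrt_lt_sqrt (by positivity) (by nlinarith)
  -- After squaring, this is `a² (b² + 4) ≤ b² (a² + 4)`.
  have hcross : a * √(b ^ 2 + 4) ≤ b * √(a ^ 2 + 4) := by
    refine (sq_le_sq₀ (by positivity) (by positivity)).1 ?_
    rw [mul_pow, mul_pow, Real.sq_sqrt (by positivity), Real.sq_sqrt (by positivity)]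
    nlinarith
  have hq : (2 + √(b ^ 2 + 4)) / b < (2 + √(a ^ 2 + 4)) / a := by
    rw [div_lt_div_iff₀ hb' ha']
    nlinarith
  have hlog := Real.log_lt_log (by positivity) hq
  unfold h
  linarith

lemma h_continuousOn : ContinuousOn h (Set.Ioi 0) := by
  intro x hx
  have hx' : 0 < x := hx
  have hne : (2 + √(x ^ 2 + 4)) / x ≠ 0 := by positivity
  apply ContinuousAt.continuousWithinAt
  unfold h
  fun_prop (disch := first | exact hne | exact hx'.ne')

lemma h_tendsto_zero : Filter.Tendsto h (nhdsWithin 0 (Set.Ioi (0 : ℝ))) Filter.atTop := by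
  have hlim : Filter.Tendsto (fun l : ℝ => -2 * Real.log l + (-3))
      (nhdsWithin 0 (Set.Ioi (0 : ℝ))) Filter.atTop :=
    Filter.tendsto_atTop_add_const_right _ _
      (Real.tendsto_log_nhdsGT_zero.const_mul_atBot_of_neg (by norm_num))
  refine Filter.tendsto_atTop_mono' _ ?_ hlim
  filter_upwards [Ioo_mem_nhdsGT (zero_lt_one' ℝ)] with l hl
  obtain ⟨h0, h1⟩ := hl
  have hs : √(l ^ 2 + 4) ≤ 3 := Real.sqrt_le_iff.2 ⟨by norm_num, by nlinarith⟩
  have hq : l⁻¹ ≤ (2 + √(l ^ 2 + 4)) / l := by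
    rw [inv_eq_one_div]
    gcongr
    linarith [Real.sqrt_nonneg (l ^ 2 + 4)]
  have hlog := Real.log_le_log (by positivity) hq
  rw [Real.log_inv] at hlog
  unfold h
  linarith

lemma h_tendsto_atTop : Filter.Tendsto h Filter.atTop Filter.atBot := by
  have hlim : Filter.Tendsto (fun l : ℝ => 2 * Real.log 3 + -l) Filter.atTop Filter.atBot :=
    Filter.tendsto_atBot_add_const_left _ _ Filter.tendsto_neg_atTop_atBot
  refine Filter.tendsto_atBot_mono' _ ?_ hlim
  filter_upwards [Filter.eventually_ge_atTop (2 : ℝ)] with l hl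
  have h0 : 0 < l := by linarith
  have hs : √(l ^ 2 + 4) ≤ l + 2 := Real.sqrt_le_iff.2 ⟨by linarith, by nlinarith⟩
  have hs' : l ≤ √(l ^ 2 + 4) := Real.le_sqrt_of_sq_le (by linarith)
  have hq : (2 + √(l ^ 2 + 4)) / l ≤ 3 := by
    rw [div_le_iff₀ h0]
    linarith
  have hlog := Real.log_le_log (by positivity) hq
  unfold h
  linarith

/-- `h` maps `(0, ∞)` onto `ℝ`; `h(λ) → +∞` as `λ → 0⁺`, `h(λ) → −∞` as `λ → ∞`,
and there is a unique `λ₀ > 0` with `h(λ₀) = 0`. -/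
theorem stmt1 :
    Set.SurjOn h (Set.Ioi (0 : ℝ)) Set.univ ∧
    Filter.Tendsto h (nhdsWithin 0 (Set.Ioi (0 : ℝ))) Filter.atTop ∧
    Filter.Tendsto h Filter.atTop Filter.atBot ∧
    (∃! l0 : ℝ, 0 < l0 ∧ h l0 = 0) := by
  have hsurj : Set.SurjOn h (Set.Ioi (0 : ℝ)) Set.univ :=
    isPreconnected_Ioi.intermediate_value_Iii
      (Filter.le_principal_iff.2 (Filter.Ioi_mem_atTop 0))
      (Filter.le_principal_iff.2 (self_mem_nhdsWithin (a := (0 : ℝ))))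
      h_continuousOn h_tendsto_atTop h_tendsto_zero
  refine ⟨hsurj, h_tendsto_zero, h_tendsto_atTop, ?_⟩
  obtain ⟨l, hl, hl0⟩ := hsurj (Set.mem_univ 0)
  exact ⟨l, ⟨hl, hl0⟩, fun y hy => h_strictAntiOn.injOn hy.1 hl (hy.2.trans hl0.symm)⟩
end

section
/- The unique positive solution λ₀ of h(λ) = 0 satisfies 1.3254 < λ₀ < 1.3255; in particular 1 < λ₀ < 3/2. -/
/-- Taylor polynomial of degree 8 with remainder at `2.39931 / 3`, cubed. -/
lemma exp_upper : Real.exp 2.39931 < 11.0165 := by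
  have h1 := Real.exp_bound' (x := 0.79977) (by norm_num) (by norm_num) (n := 9) (by norm_num)
  have h2 : Real.exp 0.79977 ≤ 2.22504 := by
    refine h1.trans ?_
    norm_num [Finset.sum_range_succ, Nat.factorial]
  have h3 : Real.exp 2.39931 = Real.exp 0.79977 ^ 3 := by
    rw [← Real.exp_nat_mul]; norm_num
  rw [h3]
  calc Real.exp 0.79977 ^ 3 ≤ 2.22504 ^ 3 := by gcongr
    _ < 11.0165 := by norm_num

/-- Taylor polynomial of degree 13 at `2.39936`. -/
lemma exp_lower : 11.01607 < Real.exp 2.39936 := by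
  have h1 := Real.sum_le_exp_of_nonneg (x := 2.39936) (by norm_num) 14
  refine lt_of_lt_of_le ?_ h1
  norm_num [Finset.sum_range_succ, Nat.factorial]

lemma exp_mul_of_h_eq_zero {l : ℝ} (hpos : 0 < l) (hzero : h l = 0) :
    Real.exp (√(l ^ 2 + 4)) * (√(l ^ 2 + 4) - 2) = √(l ^ 2 + 4) + 2 := by
  unfold h at hzero
  have hsq : √(l ^ 2 + 4) ^ 2 = l ^ 2 + 4 := Real.sq_sqrt (by positivity)
  have hs0 : 0 ≤ √(l ^ 2 + 4) := Real.sqrt_nonneg _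
  generalize √(l ^ 2 + 4) = s at *
  have he : Real.exp s = ((2 + s) / l) ^ 2 := by
    rw [show s = Real.log ((2 + s) / l) + Real.log ((2 + s) / l) by linarith,
      Real.exp_add, Real.exp_log (by positivity),
      show Real.log ((2 + s) / l) + Real.log ((2 + s) / l) = s by linarith]
    ring
  rw [he]
  field_simp
  linear_combination (s + 2) * hsq

/-- The unique positive solution `λ₀` of `h(λ) = 0` satisfies
`1.3254 < λ₀ < 1.3255`; in particular `1 < λ₀ < 3/2`. -/
theorem stmt2 (l0 : ℝ) (hpos : 0 < l0) (hzero : h l0 = 0) :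
    1.3254 < l0 ∧ l0 < 1.3255 ∧ 1 < l0 ∧ l0 < 3 / 2 := by
  have key := exp_mul_of_h_eq_zero hpos hzero
  have hsq : √(l0 ^ 2 + 4) ^ 2 = l0 ^ 2 + 4 := Real.sq_sqrt (by positivity)
  have hs0 : 0 ≤ √(l0 ^ 2 + 4) := Real.sqrt_nonneg _
  generalize √(l0 ^ 2 + 4) = s at *
  have hs2 : 2 < s := by nlinarith [pow_pos hpos 2]
  have hlow : 2.39931 < s := by
    by_contra! hle
    have h1 : Real.exp s < 11.0165 := (Real.exp_le_exp.2 hle).trans_lt exp_upper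
    have h2 := mul_lt_mul_of_pos_right h1 (sub_pos.2 hs2)
    norm_num at *
    linarith
  have hupp : s < 2.39936 := by
    by_contra! hle
    have h1 : 11.01607 < Real.exp s := exp_lower.trans_le (Real.exp_le_exp.2 hle)
    have h2 := mul_lt_mul_of_pos_right h1 (sub_pos.2 hs2)
    norm_num at *
    linarith
  have hA : 1.3254 < l0 := by
    norm_num at *
    nlinarith
  have hB : l0 < 1.3255 := by
    norm_num at *
    nlinarith
  exact ⟨hA, hB, by norm_num at *; linarith, by norm_num at *; linarith⟩
end

section
/- Fix λ > 0 and define m_λ : [0, ∞) → ℝ by m_λ(x) = −(λ/2)·√(1 − x²) for 0 ≤ x ≤ 1 and m_λ(x) = log(x + √(x² − 1)) for x ≥ 1. Then m_λ is continuous and strictly increasing, m_λ(0) = −λ/2, m_λ(1) = 0, m_λ(x) → ∞ as x → ∞, and −λ/2 < h(λ)/2; consequently there is a unique x_λ > 0 with m_λ(x_λ) = h(λ)/2, and x_λ > 1 if and only if λ < λ₀, x_λ = 1 if and only if λ = λ₀, and 0 < x_λ < 1 if and only if λ > λ₀. -/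
/-- With `s = √(l² + 4)` and `t = (2 + s) / l`, the inequality `1 - 1/t ≤ log t` reduces the
claim to `s (s - l) < 4`, which holds because `s (s - l) = 4 - l (s - l)`. -/
lemma neg_lt_h {l : ℝ} (hl : 0 < l) : -l < h l := by
  have q : Real.sqrt (l ^ 2 + 4) ^ 2 = l ^ 2 + 4 := Real.sq_sqrt (by positivity)
  have hs : 0 < Real.sqrt (l ^ 2 + 4) := Real.sqrt_pos.2 (by positivity)
  have hls : l < Real.sqrt (l ^ 2 + 4) := Real.lt_sqrt_of_sq_lt (by linarith)
  unfold h
  set s := Real.sqrt (l ^ 2 + 4)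
  have hlog := Real.one_sub_inv_le_log_of_pos (x := (2 + s) / l) (by positivity)
  have key : (s - l) / 2 < 1 - ((2 + s) / l)⁻¹ := by
    rw [inv_div, one_sub_div (by positivity), div_lt_div_iff₀ two_pos (by positivity)]
    nlinarith
  linarith

/-- Properties of `m_λ(x) = Im ξ_λ(x)` on the positive real axis: it is continuous and
strictly increasing on `[0,∞)`, with `m_λ(0) = −λ/2`, `m_λ(1) = 0`, `m_λ(x) → ∞`, and
`−λ/2 < h(λ)/2`; hence there is a unique `x_λ > 0` with `m_λ(x_λ) = h(λ)/2`, and its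
position relative to `1` is determined by the position of `λ` relative to `λ₀`. -/
theorem stmt6 (lam lam0 : ℝ) (hpos : 0 < lam) (hlam0pos : 0 < lam0) (hlam0 : h lam0 = 0)
    (m : ℝ → ℝ)
    (hm1 : ∀ x ∈ Set.Icc (0 : ℝ) 1, m x = -(lam / 2) * Real.sqrt (1 - x ^ 2))
    (hm2 : ∀ x : ℝ, 1 ≤ x → m x = Real.log (x + Real.sqrt (x ^ 2 - 1))) :
    ContinuousOn m (Set.Ici 0) ∧
    StrictMonoOn m (Set.Ici 0) ∧
    m 0 = -(lam / 2) ∧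
    m 1 = 0 ∧
    Filter.Tendsto m Filter.atTop Filter.atTop ∧
    -(lam / 2) < h lam / 2 ∧
    (∃! x : ℝ, 0 < x ∧ m x = h lam / 2) ∧
    (∀ x : ℝ, 0 < x → m x = h lam / 2 →
      ((1 < x ↔ lam < lam0) ∧ (x = 1 ↔ lam = lam0) ∧ (x < 1 ↔ lam0 < lam))) := by
  have h0 : m 0 = -(lam / 2) := by
    rw [hm1 0 (by simp)]
    simp
  have h1 : m 1 = 0 := by
    rw [hm2 1 le_rfl]
    simp
  have hcont : ContinuousOn m (Set.Ici 0) := by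
    have hg : Continuous fun x : ℝ =>
        -(lam / 2) * Real.sqrt (1 - x ^ 2) + Real.log (max x 1 + Real.sqrt (x ^ 2 - 1)) := by
      refine Continuous.add (by fun_prop) (Continuous.log (by fun_prop) fun x => ?_)
      have : (1 : ℝ) ≤ max x 1 := le_max_right _ _
      positivity
    refine hg.continuousOn.congr fun x hx => ?_
    have hx0 : 0 ≤ x := hx
    dsimp only
    rcases le_total x 1 with hx1 | hx1
    · rw [hm1 x ⟨hx0, hx1⟩, max_eq_right hx1,
        Real.sqrt_eq_zero_of_nonpos (show x ^ 2 - 1 ≤ 0 by nlinarith)]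
      simp
    · rw [hm2 x hx1, max_eq_left hx1,
        Real.sqrt_eq_zero_of_nonpos (show 1 - x ^ 2 ≤ 0 by nlinarith)]
      simp
  have hmonoL : StrictMonoOn m (Set.Icc 0 1) := by
    intro x hx y hy hxy
    rw [hm1 x hx, hm1 y hy]
    have hlt : Real.sqrt (1 - y ^ 2) < Real.sqrt (1 - x ^ 2) :=
      Real.sqrt_lt_sqrt (by nlinarith [hy.1, hy.2]) (by nlinarith [hx.1])
    nlinarith
  have hmonoR : StrictMonoOn m (Set.Ici 1) := by
    intro x hx y hy hxy
    have hx1 : 1 ≤ x := hx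
    rw [hm2 x hx, hm2 y hy]
    have hle : Real.sqrt (x ^ 2 - 1) ≤ Real.sqrt (y ^ 2 - 1) :=
      Real.sqrt_le_sqrt (by nlinarith)
    exact Real.log_lt_log (by positivity) (by linarith)
  have hmono : StrictMonoOn m (Set.Ici 0) := by
    rw [← Set.Icc_union_Ici_eq_Ici (zero_le_one (α := ℝ))]
    exact hmonoL.union hmonoR (isGreatest_Icc zero_le_one) isLeast_Ici
  have htend : Filter.Tendsto m Filter.atTop Filter.atTop := by
    refine Filter.tendsto_atTop_mono' _ ?_ Real.tendsto_log_atTop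
    filter_upwards [Filter.eventually_ge_atTop 1] with x hx
    rw [hm2 x hx]
    exact Real.log_le_log (by linarith) (by linarith [Real.sqrt_nonneg (x ^ 2 - 1)])
  have hlow : -(lam / 2) < h lam / 2 := by linarith [neg_lt_h hpos]
  refine ⟨hcont, hmono, h0, h1, htend, hlow, ?_, ?_⟩
  · obtain ⟨b, hb, hb0⟩ :=
      ((htend.eventually_ge_atTop (h lam / 2)).and (Filter.eventually_ge_atTop 0)).exists
    obtain ⟨x, hx, hmx⟩ := intermediate_value_Icc hb0
      (hcont.mono Set.Icc_subset_Ici_self) ⟨h0.trans_le hlow.le, hb⟩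
    have hx0 : x ≠ 0 := by
      rintro rfl
      linarith
    refine ⟨x, ⟨lt_of_le_of_ne hx.1 hx0.symm, hmx⟩, ?_⟩
    rintro y ⟨hy, hmy⟩
    exact hmono.injOn hy.le hx.1 (hmy.trans hmx.symm)
  · intro x hx hmx
    have one_mem : (1 : ℝ) ∈ Set.Ici (0 : ℝ) := zero_le_one (α := ℝ)
    have x_mem : x ∈ Set.Ici (0 : ℝ) := hx.le
    have hml : m x = h lam / 2 ∧ m 1 = h lam0 / 2 := ⟨hmx, by rw [h1, hlam0, zero_div]⟩
    refine ⟨?_, ?_, ?_⟩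
    · rw [← hmono.lt_iff_lt one_mem x_mem, ← h_strictAntiOn.lt_iff_gt hlam0pos hpos,
        hml.1, hml.2, div_lt_div_iff_of_pos_right two_pos]
    · rw [← hmono.injOn.eq_iff x_mem one_mem, ← h_strictAntiOn.injOn.eq_iff hpos hlam0pos,
        hml.1, hml.2, div_left_inj' two_ne_zero]
    · rw [← hmono.lt_iff_lt x_mem one_mem, ← h_strictAntiOn.lt_iff_gt hpos hlam0pos,
        hml.1, hml.2, div_lt_div_iff_of_pos_right two_pos]
end

section
/- Fix λ > 0 and let z* = 2i/λ. Then, with S(z) = √(z−1)·√(z+1) (principal square roots) and Log the principal complex logarithm, one has Im( i·Log(z* + S(z*)) − (λ/2)·S(z*) ) = log((√(λ² + 4) + 2)/λ) − √(λ² + 4)/2 = h(λ)/2. -/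
/-- `S(z) = √(z−1)·√(z+1)`, principal branches. -/
noncomputable def S (z : ℂ) : ℂ := (z - 1) ^ (1 / 2 : ℂ) * (z + 1) ^ (1 / 2 : ℂ)

/-- On the positive imaginary axis the product of principal square roots picks the branch of
`√(z² - 1)` with positive imaginary part. -/
lemma S_mul_I (y : ℝ) (hy : 0 < y) :
    S (y * Complex.I) = (Real.sqrt (y ^ 2 + 1) : ℝ) * Complex.I := by
  set w : ℂ := y * Complex.I + 1 with hw
  have him : w.im = y := by simp [hw]
  have hw0 : w ≠ 0 := fun h0 => by rw [h0] at him; simp at him; exact hy.ne him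
  have hz : (y * Complex.I - 1 : ℂ) = -(starRingEnd ℂ w) := by
    apply Complex.ext <;> simp [hw]
  have harg : (-(starRingEnd ℂ w)).arg = Real.pi - w.arg := by
    rw [Complex.arg_neg_eq_arg_add_pi_of_im_neg (by simp [him, hy]), Complex.arg_conj,
      if_neg]
    · ring
    · rw [Complex.arg_eq_pi_iff]
      rintro ⟨-, h2⟩
      exact hy.ne (h2.symm.trans him)
  have hnorm : ‖w‖ = Real.sqrt (y ^ 2 + 1) := by
    rw [Complex.norm_eq_sqrt_sq_add_sq]
    simp [hw, add_comm]
  have hlog : Complex.log (-(starRingEnd ℂ w)) + Complex.log w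
      = 2 * (Real.log (Real.sqrt (y ^ 2 + 1)) : ℝ) + Real.pi * Complex.I := by
    simp only [Complex.log, harg, norm_neg, RCLike.norm_conj, hnorm]
    push_cast
    ring
  have hr : 0 < Real.sqrt (y ^ 2 + 1) := by positivity
  have hz0 : -(starRingEnd ℂ w) ≠ 0 := by simpa using hw0
  unfold S
  rw [← hw, hz, Complex.cpow_def_of_ne_zero hz0, Complex.cpow_def_of_ne_zero hw0,
    ← Complex.exp_add, ← add_mul, hlog]
  have : (2 * (Real.log (Real.sqrt (y ^ 2 + 1)) : ℝ) + Real.pi * Complex.I : ℂ) * (1 / 2)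
      = (Real.log (Real.sqrt (y ^ 2 + 1)) : ℝ) + Real.pi / 2 * Complex.I := by ring
  rw [this, Complex.exp_add, Complex.exp_pi_div_two_mul_I, ← Complex.ofReal_exp,
    Real.exp_log hr]

/-- At the double zero `z* = 2i/λ` of the quadratic differential,
`Im ξ_λ(z*) = log((√(λ²+4) + 2)/λ) − √(λ²+4)/2 = h(λ)/2`. -/
theorem stmt7 (lam : ℝ) (hpos : 0 < lam) :
    (Complex.I * Complex.log (2 * Complex.I / (lam : ℂ) + S (2 * Complex.I / (lam : ℂ)))
        - ((lam : ℂ) / 2) * S (2 * Complex.I / (lam : ℂ))).im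
      = Real.log ((Real.sqrt (lam ^ 2 + 4) + 2) / lam) - Real.sqrt (lam ^ 2 + 4) / 2 ∧
    Real.log ((Real.sqrt (lam ^ 2 + 4) + 2) / lam) - Real.sqrt (lam ^ 2 + 4) / 2
      = h lam / 2 := by
  set R := Real.sqrt (lam ^ 2 + 4) with hR
  have hR0 : 0 < R := by positivity
  have hl : (lam : ℂ) ≠ 0 := by exact_mod_cast hpos.ne'
  have hsq : Real.sqrt ((2 / lam) ^ 2 + 1) = R / lam := by
    rw [Real.sqrt_eq_iff_mul_self_eq_of_pos (by positivity)]
    have : R * R = lam ^ 2 + 4 := Real.mul_self_sqrt (by positivity)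
    field_simp
    linarith
  have hS : S (2 * Complex.I / (lam : ℂ)) = ((R / lam : ℝ) : ℂ) * Complex.I := by
    rw [← hsq, ← S_mul_I (2 / lam) (by positivity)]
    congr 1
    push_cast
    ring
  refine ⟨?_, ?_⟩
  · have hsum : 2 * Complex.I / (lam : ℂ) + ((R / lam : ℝ) : ℂ) * Complex.I
        = (((R + 2) / lam : ℝ) : ℂ) * Complex.I := by
      push_cast
      ring
    have hprod : (lam : ℂ) / 2 * (((R / lam : ℝ) : ℂ) * Complex.I)
        = ((R / 2 : ℝ) : ℂ) * Complex.I := by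
      push_cast
      field_simp
    have hpos' : 0 < (R + 2) / lam := by positivity
    rw [hS, hsum, hprod, Complex.sub_im, Complex.I_mul_im, Complex.log_re, norm_mul,
      Complex.norm_I, mul_one, Complex.norm_real, Real.norm_of_nonneg hpos'.le]
    simp
  · unfold h
    rw [← hR, add_comm 2 R]
    ring
end

section
/- Let 0 ≤ λ < λ₀. Then there exists N ∈ ℕ such that for every n ≥ N there is a unique monic polynomial p_n of degree n with complex coefficients satisfying ∫_{−1}^{1} p_n(x)·x^k·e^{i n λ x} dx = 0 for all k = 0, 1, …, n−1. -/
/-- `p` is the `n`-th monic orthogonal polynomial for the oscillatory weight `e^{iωx}`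
on `[−1,1]`: `p` is monic of degree `n` and `∫_{−1}^{1} p(x) x^k e^{iωx} dx = 0` for
`k = 0,…,n−1`. -/
def IsOrthoPoly (ω : ℝ) (n : ℕ) (p : Polynomial ℂ) : Prop :=
  p.Monic ∧ p.natDegree = n ∧
  ∀ k < n, (∫ x in (-1 : ℝ)..1,
    p.eval (x : ℂ) * (x : ℂ) ^ k * Complex.exp (Complex.I * ω * x)) = 0

section

open Complex MeasureTheory Filter Topology Set Metric
open scoped Interval

/-! ### Holomorphy of parameter integrals -/

theorem differentiableOn_param_integral {U : Set ℂ} (hU : IsOpen U) {a b : ℝ} {G : ℂ → ℝ → ℂ}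
    (hc : ContinuousOn (fun p : ℂ × ℝ => G p.1 p.2) (U ×ˢ uIcc a b))
    (hd : ∀ t ∈ uIcc a b, DifferentiableOn ℂ (fun z => G z t) U) :
    DifferentiableOn ℂ (fun z => ∫ t in a..b, G z t) U := by
  intro z₀ hz₀
  obtain ⟨δ', hδ', hball⟩ := Metric.isOpen_iff.1 hU z₀ hz₀
  obtain ⟨δ, hδ, h2⟩ : ∃ δ > 0, 2 * δ < δ' := ⟨δ' / 4, by positivity, by linarith⟩
  have hsub : closedBall z₀ (2 * δ) ⊆ U :=
    (closedBall_subset_ball h2).trans hball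
  have hslice : ∀ z ∈ U, ContinuousOn (G z) (uIcc a b) := fun z hz =>
    hc.comp (f := fun t : ℝ => (z, t)) (by fun_prop) (fun t ht => ⟨hz, ht⟩)
  have hmeas : ∀ z ∈ U, AEStronglyMeasurable (G z) (volume.restrict (Ι a b)) := fun z hz =>
    ((hslice z hz).mono uIoc_subset_uIcc).aestronglyMeasurable measurableSet_uIoc
  obtain ⟨C, hC⟩ := ((isCompact_closedBall z₀ (2 * δ)).prod isCompact_uIcc
    (s := closedBall z₀ (2 * δ)) (t := uIcc a b)).exists_bound_of_continuousOn
      (hc.mono (prod_mono hsub le_rfl))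
  have hdiffAt : ∀ t ∈ uIcc a b, ∀ z ∈ U, DifferentiableAt ℂ (fun z => G z t) z :=
    fun t ht z hz => (hd t ht).differentiableAt (hU.mem_nhds hz)
  have key := (intervalIntegral.hasDerivAt_integral_of_dominated_loc_of_deriv_le (μ := volume)
    (F := G) (F' := fun z t => deriv (fun z => G z t) z) (x₀ := z₀) (s := ball z₀ δ)
    (bound := fun _ => C / δ) (a := a) (b := b)
    (ball_mem_nhds _ hδ) ?_ ((hslice z₀ hz₀).intervalIntegrable) ?_ ?_ (by simp) ?_).2
  · exact key.differentiableAt.differentiableWithinAt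
  · filter_upwards [hU.mem_nhds hz₀] with z hz using hmeas z hz
  -- the derivative is a pointwise limit of difference quotients, hence measurable
  · have hseq : Tendsto (fun n : ℕ => z₀ + (((n : ℝ) + 1)⁻¹ : ℝ) * (δ : ℂ)) atTop (𝓝[≠] z₀) := by
      refine tendsto_nhdsWithin_iff.2 ⟨?_, ?_⟩
      · have h1 : Tendsto (fun n : ℕ => ((n : ℝ) + 1)⁻¹) atTop (𝓝 0) := by
          simpa [one_div] using tendsto_one_div_add_atTop_nhds_zero_nat (𝕜 := ℝ)
        have h3 := ((Complex.continuous_ofReal.tendsto 0).comp h1)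
        simpa using (h3.mul_const (δ : ℂ)).const_add z₀
      · filter_upwards with n
        have : (((n : ℝ) + 1)⁻¹ : ℝ) ≠ 0 := by positivity
        simp only [mem_compl_iff, mem_singleton_iff, add_eq_left, mul_eq_zero, ofReal_eq_zero]
        push Not
        exact ⟨this, hδ.ne'⟩
    refine aestronglyMeasurable_of_tendsto_ae (u := atTop)
      (f := fun (n : ℕ) t => slope (fun z => G z t) z₀ (z₀ + (((n : ℝ) + 1)⁻¹ : ℝ) * (δ : ℂ))) ?_ ?_
    · intro n
      simp only [slope_def_field]
      refine AEStronglyMeasurable.mul ((hmeas _ ?_).sub (hmeas _ hz₀)) aestronglyMeasurable_const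
      apply hsub
      rw [mem_closedBall, dist_self_add_left, norm_mul, norm_real, norm_real, Real.norm_eq_abs,
        Real.norm_eq_abs, abs_of_pos hδ, abs_of_pos (by positivity)]
      have : ((n : ℝ) + 1)⁻¹ ≤ 1 := inv_le_one_of_one_le₀ (by linarith [n.cast_nonneg (α := ℝ)])
      nlinarith
    · refine (ae_restrict_iff' measurableSet_uIoc).2 (ae_of_all _ fun t ht => ?_)
      exact (hasDerivAt_iff_tendsto_slope.1
        (hdiffAt t (uIoc_subset_uIcc ht) z₀ hz₀).hasDerivAt).comp hseq
  · refine ae_of_all _ fun t ht z hz => ?_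
    have hzz : closedBall z δ ⊆ closedBall z₀ (2 * δ) := by
      apply closedBall_subset_closedBall'
      have := mem_ball.1 hz
      linarith
    refine Complex.norm_deriv_le_of_forall_mem_sphere_norm_le hδ
      (((hd t (uIoc_subset_uIcc ht)).mono (hzz.trans hsub)).diffContOnCl_ball le_rfl) ?_
    intro w hw
    exact hC (w, t) ⟨hzz (sphere_subset_closedBall hw), uIoc_subset_uIcc ht⟩
  · refine ae_of_all _ fun t ht z hz => (hdiffAt t (uIoc_subset_uIcc ht) z ?_).hasDerivAt
    exact hsub (ball_subset_closedBall (ball_subset_ball (by linarith) hz))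

/-! ### Symmetric functions on an annulus -/

/-- `Z` is continuous on the closed annulus `R ≤ |v| ≤ 1/R`, holomorphic in its interior, and
invariant under `v ↦ 1/v`. -/
structure IsInner (R : ℝ) (Z : ℂ → ℂ) : Prop where
  cont : ContinuousOn Z (closedBall 0 R⁻¹ \ ball 0 R)
  diff : DifferentiableOn ℂ Z (ball 0 R⁻¹ \ closedBall 0 R)
  symm : ∀ v ∈ closedBall (0 : ℂ) R⁻¹ \ ball 0 R, Z v⁻¹ = Z v

/-- `2π` times the `k`-th Laurent coefficient of `F` on the circle `|v| = R`. -/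
noncomputable def laurentCoeff (R : ℝ) (F : ℂ → ℂ) (k : ℤ) : ℂ :=
  ∫ t in (0 : ℝ)..2 * Real.pi, (circleMap 0 R t) ^ (-k) * F (circleMap 0 R t)

theorem laurentCoeff_eq_circleIntegral {R : ℝ} (hR : 0 < R) (F : ℂ → ℂ) (k : ℤ) :
    (∮ v in C(0, R), v ^ (-k - 1) * F v) = I * laurentCoeff R F k := by
  rw [circleIntegral, laurentCoeff, ← intervalIntegral.integral_const_mul]
  congr 1
  ext t
  have h0 : circleMap 0 R t ≠ 0 := circleMap_ne_center hR.ne'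
  rw [deriv_circleMap, smul_eq_mul, zpow_sub_one₀ h0]
  field_simp

theorem fourierCoeffOn_circle {R : ℝ} (hR : 0 < R) (F : ℂ → ℂ) (k : ℤ) :
    fourierCoeffOn Real.two_pi_pos (fun t : ℝ => F (circleMap 0 R t)) k
      = (((2 * Real.pi)⁻¹ : ℝ) : ℂ) * (R : ℂ) ^ k * laurentCoeff R F k := by
  rw [fourierCoeffOn_eq_integral, laurentCoeff]
  have : ∀ t : ℝ, (fourier (-k) (t : AddCircle (2 * Real.pi - 0))) • F (circleMap 0 R t)
      = (R : ℂ) ^ k * ((circleMap 0 R t) ^ (-k) * F (circleMap 0 R t)) := by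
    intro t
    rw [fourier_coe_apply, smul_eq_mul, circleMap_zero, mul_zpow, ← Complex.exp_int_mul, zpow_neg,
      ← mul_assoc, ← mul_assoc, mul_inv_cancel₀ (zpow_ne_zero _ (by exact_mod_cast hR.ne')), one_mul]
    congr 2
    have : (Real.pi : ℂ) ≠ 0 := by exact_mod_cast Real.pi_ne_zero
    push_cast
    field_simp
    ring
  simp_rw [this, intervalIntegral.integral_const_mul]
  rw [sub_zero, real_smul]
  push_cast
  ring

/-- The contour is moved from `|v| = R` to `|v| = 1/R`, and then `v` is replaced by `1/v`. -/
theorem IsInner.laurentCoeff_neg {R : ℝ} (hR : 0 < R) (hR1 : R < 1) {Z : ℂ → ℂ} (hZ : IsInner R Z)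
    (k : ℤ) : laurentCoeff R Z (-k) = laurentCoeff R Z k := by
  have hR' : R ≤ R⁻¹ := hR1.le.trans ((one_le_inv₀ hR).2 hR1.le)
  have h0 : ∀ v ∈ (closedBall (0 : ℂ) R⁻¹ \ ball 0 R), v ≠ 0 := by
    rintro v ⟨-, hv⟩ rfl
    exact hv (mem_ball_self hR)
  have h1 := Complex.circleIntegral_eq_of_differentiable_on_annulus_off_countable hR hR'
    (c := 0) (f := fun v => v ^ (-k - 1) * Z v) countable_empty ?_ ?_
  · rw [laurentCoeff_eq_circleIntegral hR, laurentCoeff_eq_circleIntegral (inv_pos.2 hR)] at h1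
    rw [← mul_left_cancel₀ I_ne_zero h1, laurentCoeff, laurentCoeff]
    have h2 := intervalIntegral.integral_comp_sub_left (a := 0) (b := 2 * Real.pi)
      (fun t => (circleMap 0 R⁻¹ t) ^ (-k) * Z (circleMap 0 R⁻¹ t)) (2 * Real.pi)
    rw [sub_zero, sub_self] at h2
    rw [← h2]
    congr 1
    ext t
    have h3 : circleMap 0 R⁻¹ (2 * Real.pi - t) = (circleMap 0 R t)⁻¹ := by
      rw [circleMap_zero, circleMap_zero, mul_inv, ← Complex.exp_neg]
      push_cast
      congr 1
      rw [sub_mul, Complex.exp_sub, exp_two_pi_mul_I, Complex.exp_neg, one_div]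
    rw [h3, hZ.symm]
    · simp
    · have := circleMap_mem_sphere 0 hR.le t
      rw [mem_sphere] at this
      exact ⟨by rw [mem_closedBall, this]; exact hR', by rw [mem_ball, this]; exact lt_irrefl _⟩
  · refine ContinuousOn.mul (fun v hv => ?_) hZ.cont
    exact (continuousAt_zpow₀ _ _ (Or.inl (h0 v hv))).continuousWithinAt
  · rintro v ⟨hv, -⟩
    have hv' : v ≠ 0 := h0 v ⟨ball_subset_closedBall hv.1, fun h => hv.2 (ball_subset_closedBall h)⟩
    refine DifferentiableAt.mul (differentiableAt_zpow.2 (Or.inl hv')) ?_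
    exact hZ.diff.differentiableAt ((isOpen_ball.sdiff isClosed_closedBall).mem_nhds hv)

theorem laurentCoeff_outer {R : ℝ} (hR : 0 < R) (hR1 : R < 1) {H : ℂ → ℂ}
    (hH : DifferentiableOn ℂ H (ball 0 1)) {k : ℤ} (hk : k ≤ 0) :
    laurentCoeff R (fun v => v * H v) k = 0 := by
  obtain ⟨m, rfl⟩ : ∃ m : ℕ, k = -m := ⟨(-k).toNat, by omega⟩
  have h1 : (∮ v in C(0, R), v ^ m * H v) = 0 := by
    refine Complex.circleIntegral_eq_zero_of_differentiable_on_off_countable hR.le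
      countable_empty ?_ ?_
    · exact (continuousOn_pow m).mul (hH.continuousOn.mono (closedBall_subset_ball hR1))
    · rintro z ⟨hz, -⟩
      exact (differentiableAt_id.pow m).mul
        (hH.differentiableAt (isOpen_ball.mem_nhds (ball_subset_ball hR1.le hz)))
  have h2 := laurentCoeff_eq_circleIntegral hR (fun v => v * H v) (-m)
  rw [← mul_right_inj' I_ne_zero, ← h2, mul_zero]
  refine Eq.trans (circleIntegral.integral_congr (E := ℂ) hR.le fun v hv => ?_) h1
  have h0 : v ≠ 0 := by rintro rfl; simp at hv; exact hR.ne hv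
  simp only [neg_neg]
  rw [zpow_sub_one₀ h0, zpow_natCast]
  field_simp

/-- If a symmetric function equals `v H(v)` up to an error on `|v| = R`, with `H` holomorphic in the
unit disc, then the error controls `v H(v)` in `L²`. Indeed `v H(v)` has only positive powers, so by
symmetry of `Z` its `k`-th coefficient is the difference of the coefficients `-k` and `k` of the
error; Parseval and `R^k ≤ R^{-k}` finish. -/
theorem outer_L2_le {R : ℝ} (hR : 0 < R) (hR1 : R < 1) {Z H Er : ℂ → ℂ} (hZ : IsInner R Z)
    (hH : DifferentiableOn ℂ H (ball 0 1))
    (hEq : ∀ v ∈ sphere (0 : ℂ) R, Z v = v * H v + Er v) :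
    ∫ t in (0 : ℝ)..2 * Real.pi, ‖circleMap 0 R t * H (circleMap 0 R t)‖ ^ 2 ≤
      4 * ∫ t in (0 : ℝ)..2 * Real.pi, ‖Er (circleMap 0 R t)‖ ^ 2 := by
  have hmem : ∀ t, circleMap 0 R t ∈ sphere (0 : ℂ) R := circleMap_mem_sphere 0 hR.le
  have hR' : R ≤ R⁻¹ := hR1.le.trans ((one_le_inv₀ hR).2 hR1.le)
  have hZc : Continuous fun t => Z (circleMap 0 R t) := by
    refine hZ.cont.comp_continuous (continuous_circleMap 0 R) fun t => ?_
    have := mem_sphere.1 (hmem t)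
    exact ⟨by rw [mem_closedBall, this]; exact hR', by rw [mem_ball, this]; exact lt_irrefl _⟩
  have hGc : Continuous fun t => circleMap 0 R t * H (circleMap 0 R t) := by
    refine (continuous_circleMap 0 R).mul (hH.continuousOn.comp_continuous (continuous_circleMap 0 R)
      fun t => closedBall_subset_ball hR1 (sphere_subset_closedBall (hmem t)))
  have hErq : (fun t => Er (circleMap 0 R t))
      = fun t => Z (circleMap 0 R t) - circleMap 0 R t * H (circleMap 0 R t) := by
    ext t; rw [hEq _ (hmem t)]; ring
  have hEc : Continuous fun t => Er (circleMap 0 R t) := by rw [hErq]; exact hZc.sub hGc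
  have hmemLp : ∀ f : ℝ → ℂ, Continuous f → MemLp f 2 (volume.restrict (Ioc 0 (2 * Real.pi))) := by
    intro f hf
    obtain ⟨B, hB⟩ := isCompact_Icc.exists_bound_of_continuousOn
      (hf.continuousOn (s := Icc 0 (2 * Real.pi)))
    refine MemLp.of_bound hf.aestronglyMeasurable B ?_
    exact (ae_restrict_iff' measurableSet_Ioc).2
      (ae_of_all _ fun t ht => hB t (Ioc_subset_Icc_self ht))
  have hG2 := hasSum_sq_fourierCoeffOn Real.two_pi_pos (hmemLp _ hGc)
  have hE2 := hasSum_sq_fourierCoeffOn Real.two_pi_pos (hmemLp _ hEc)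
  have hE2' := (Equiv.neg ℤ).hasSum_iff.2 hE2
  have hlin : ∀ k : ℤ, laurentCoeff R Er k = laurentCoeff R Z k - laurentCoeff R (fun v => v * H v) k := by
    intro k
    have hz : Continuous fun t => (circleMap 0 R t) ^ (-k) :=
      (continuous_circleMap 0 R).zpow₀ _ fun t => Or.inl (circleMap_ne_center hR.ne')
    rw [laurentCoeff, laurentCoeff, laurentCoeff, ← intervalIntegral.integral_sub]
    · congr 1
      ext t
      rw [hEq _ (hmem t)]; ring
    · exact (hz.mul hZc).intervalIntegrable _ _
    · exact (hz.mul hGc).intervalIntegrable _ _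
  have hRk : ∀ k : ℕ, ‖(R : ℂ) ^ (k : ℤ)‖ ≤ ‖(R : ℂ) ^ (-(k : ℤ))‖ := by
    intro k
    rw [norm_zpow, norm_zpow, norm_real, Real.norm_of_nonneg hR.le]
    exact zpow_le_zpow_right_of_le_one₀ hR hR1.le (by omega)
  have key : ∀ k : ℤ,
      ‖fourierCoeffOn Real.two_pi_pos (fun t => circleMap 0 R t * H (circleMap 0 R t)) k‖ ^ 2 ≤
      ‖fourierCoeffOn Real.two_pi_pos (fun t => Er (circleMap 0 R t)) k‖ ^ 2
      + ‖fourierCoeffOn Real.two_pi_pos (fun t => Er (circleMap 0 R t)) (-k)‖ ^ 2 +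
      (‖fourierCoeffOn Real.two_pi_pos (fun t => Er (circleMap 0 R t)) k‖ ^ 2
      + ‖fourierCoeffOn Real.two_pi_pos (fun t => Er (circleMap 0 R t)) (-k)‖ ^ 2) := by
    intro k
    rw [fourierCoeffOn_circle hR (fun v => v * H v), fourierCoeffOn_circle hR Er,
      fourierCoeffOn_circle hR Er]
    rcases le_or_gt k 0 with hk | hk
    · rw [laurentCoeff_outer hR hR1 hH hk]
      rw [mul_zero, norm_zero, zero_pow two_ne_zero]
      positivity
    · have e1 := hlin (-k)
      have e2 := hlin k
      rw [laurentCoeff_outer hR hR1 hH (by omega : -k ≤ 0), sub_zero,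
        hZ.laurentCoeff_neg hR hR1] at e1
      have e3 : laurentCoeff R (fun v => v * H v) k
          = laurentCoeff R Er (-k) - laurentCoeff R Er k := by rw [e1, e2]; ring
      rw [e3]
      set A := laurentCoeff R Er (-k)
      set B := laurentCoeff R Er k
      have e4 : ‖(((2 * Real.pi)⁻¹ : ℝ) : ℂ) * (R : ℂ) ^ k * A‖
          ≤ ‖(((2 * Real.pi)⁻¹ : ℝ) : ℂ) * (R : ℂ) ^ (-k) * A‖ := by
        obtain ⟨m, rfl⟩ : ∃ m : ℕ, k = m := ⟨k.toNat, by omega⟩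
        simp only [norm_mul]
        have := hRk m
        gcongr
      rw [mul_sub]
      have e5 := norm_sub_le ((((2 * Real.pi)⁻¹ : ℝ) : ℂ) * (R : ℂ) ^ k * A)
        ((((2 * Real.pi)⁻¹ : ℝ) : ℂ) * (R : ℂ) ^ k * B)
      have e6 := pow_le_pow_left₀ (norm_nonneg _) e5 2
      have e7 := pow_le_pow_left₀ (norm_nonneg _) e4 2
      refine e6.trans ?_
      nlinarith [sq_nonneg (‖(((2 * Real.pi)⁻¹ : ℝ) : ℂ) * (R : ℂ) ^ k * A‖
        - ‖(((2 * Real.pi)⁻¹ : ℝ) : ℂ) * (R : ℂ) ^ k * B‖)]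
  have hle := hasSum_le key hG2 ((hE2.add hE2').add (hE2.add hE2'))
  rw [smul_eq_mul, smul_eq_mul] at hle
  have hpi : 0 < (2 * Real.pi - 0)⁻¹ := by rw [sub_zero]; exact inv_pos.2 Real.two_pi_pos
  nlinarith

/-! ### Taylor coefficients of `(1 - x)^{-1/2}` and the logarithmic ratio -/

/-- `g_k = binom(2k, k) / 4^k`, the Taylor coefficients of `(1 - x)^{-1/2}`. -/
noncomputable def gCoef : ℕ → ℝ
  | 0 => 1
  | k + 1 => gCoef k * ((2 * k + 1) / (2 * k + 2))

/-- `d_k = 2 (2k)!! / (2k+1)!!`, the leading coefficients of the Legendre functions of the second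
kind in the Joukowski variable. -/
noncomputable def dCoef : ℕ → ℝ
  | 0 => 2
  | k + 1 => dCoef k * ((2 * k + 2) / (2 * k + 3))

theorem gCoef_pos (k : ℕ) : 0 < gCoef k := by
  induction k with
  | zero => norm_num [gCoef]
  | succ k ih => rw [gCoef]; positivity

theorem dCoef_pos (k : ℕ) : 0 < dCoef k := by
  induction k with
  | zero => norm_num [dCoef]
  | succ k ih => rw [dCoef]; positivity

theorem gCoef_le_one (k : ℕ) : gCoef k ≤ 1 := by
  induction k with
  | zero => norm_num [gCoef]
  | succ k ih =>
    rw [gCoef]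
    have : ((2 * k + 1) / (2 * k + 2) : ℝ) ≤ 1 := by rw [div_le_one (by positivity)]; linarith
    exact mul_le_one₀ ih (by positivity) this

theorem dCoef_antitone : Antitone dCoef := by
  refine antitone_nat_of_succ_le fun k => ?_
  rw [dCoef]
  have : ((2 * k + 2) / (2 * k + 3) : ℝ) ≤ 1 := by rw [div_le_one (by positivity)]; linarith
  exact mul_le_of_le_one_right (dCoef_pos k).le this

theorem gCoef_mul_dCoef (k : ℕ) : gCoef k * dCoef k = 2 / (2 * k + 1) := by
  induction k with
  | zero => norm_num [gCoef, dCoef]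
  | succ k ih =>
    rw [gCoef, dCoef]
    have : gCoef k * ((2 * k + 1) / (2 * k + 2)) * (dCoef k * ((2 * k + 2) / (2 * k + 3)))
      = gCoef k * dCoef k * ((2 * k + 1) / (2 * k + 3)) := by field_simp
    rw [this, ih]
    push_cast
    field_simp
    ring

theorem gCoef_mul_le (k l : ℕ) : gCoef k * gCoef l ≤ gCoef (k + l) := by
  induction l with
  | zero => simp [gCoef]
  | succ l ih =>
    rw [← add_assoc, gCoef, gCoef, ← mul_assoc]
    have : ((2 * l + 1) / (2 * l + 2) : ℝ) ≤ (2 * (k + l : ℕ) + 1) / (2 * (k + l : ℕ) + 2) := by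
      rw [div_le_div_iff₀ (by positivity) (by positivity)]
      push_cast
      nlinarith [k.cast_nonneg (α := ℝ)]
    exact mul_le_mul ih this (by positivity) (gCoef_pos _).le

theorem tendsto_ratio_aux (a b c : ℝ) (ha : 0 < a) :
    Tendsto (fun m : ℕ => (a * m + b) / (a * m + c)) atTop (𝓝 1) := by
  have h1 : Tendsto (fun m : ℕ => a * (m : ℝ) + c) atTop atTop :=
    tendsto_atTop_add_const_right _ _ (tendsto_natCast_atTop_atTop.const_mul_atTop ha)
  have h2 : Tendsto (fun m : ℕ => 1 + (b - c) / (a * m + c)) atTop (𝓝 (1 + 0)) :=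
    (h1.const_div_atTop (b - c)).const_add 1
  rw [add_zero] at h2
  refine h2.congr' ?_
  filter_upwards [h1.eventually_gt_atTop 0] with m hm
  field_simp
  ring

theorem tendsto_gCoef_ratio (k : ℕ) :
    Tendsto (fun m : ℕ => gCoef m / gCoef (m + k)) atTop (𝓝 1) := by
  induction k with
  | zero =>
    refine tendsto_const_nhds.congr fun m => ?_
    rw [add_zero, div_self (gCoef_pos m).ne']
  | succ k ih =>
    have h := ih.mul (tendsto_ratio_aux 2 (2 * k + 2) (2 * k + 1) two_pos)
    rw [one_mul] at h
    refine h.congr fun m => ?_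
    have := (gCoef_pos (m + k)).ne'
    rw [show m + (k + 1) = (m + k) + 1 from rfl, gCoef.eq_2]
    push_cast
    field_simp
    ring

theorem tendsto_dCoef_ratio (k : ℕ) :
    Tendsto (fun m : ℕ => dCoef (m + k) / dCoef m) atTop (𝓝 1) := by
  induction k with
  | zero =>
    refine tendsto_const_nhds.congr fun m => ?_
    rw [add_zero, div_self (dCoef_pos m).ne']
  | succ k ih =>
    have h := ih.mul (tendsto_ratio_aux 2 (2 * k + 2) (2 * k + 3) two_pos)
    rw [one_mul] at h
    refine h.congr fun m => ?_
    have := (dCoef_pos m).ne'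
    rw [show m + (k + 1) = (m + k) + 1 from rfl, dCoef.eq_2]
    push_cast
    field_simp
    ring

/-- `log((1 + v)/(1 - v))` on the unit disc. -/
noncomputable def logRatio (v : ℂ) : ℂ := log (1 + v) - log (1 - v)

/-- `(1 - v²)^{-1/2}` on the unit disc. -/
noncomputable def tau (v : ℂ) : ℂ := exp (-(1 / 2) * (log (1 + v) + log (1 - v)))

theorem one_add_ne_zero' {v : ℂ} (hv : ‖v‖ < 1) : 1 + v ≠ 0 := by
  intro h
  have : v = -1 := by linear_combination h
  rw [this] at hv; simp at hv

theorem one_sub_ne_zero' {v : ℂ} (hv : ‖v‖ < 1) : 1 - v ≠ 0 := by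
  rw [sub_eq_add_neg]; exact one_add_ne_zero' (by rwa [norm_neg])

theorem tau_mul_one_add {v : ℂ} (hv : ‖v‖ < 1) : tau v * (1 + v) = exp (logRatio v / 2) := by
  conv_lhs => rw [← exp_log (one_add_ne_zero' hv)]
  rw [tau, ← exp_add, logRatio]
  congr 1; ring

theorem tau_mul_one_sub {v : ℂ} (hv : ‖v‖ < 1) : tau v * (1 - v) = exp (-(logRatio v / 2)) := by
  conv_lhs => rw [← exp_log (one_sub_ne_zero' hv)]
  rw [tau, ← exp_add, logRatio]
  congr 1; ring

theorem choose_eq_gCoef (k : ℕ) : Ring.choose ((1 / 2 : ℂ) + k - 1) k = (gCoef k : ℂ) := by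
  have h := Ring.factorial_nsmul_multichoose_eq_ascPochhammer (1 / 2 : ℂ) k
  rw [Ring.multichoose_eq, Polynomial.ascPochhammer_smeval_eq_eval, nsmul_eq_mul] at h
  have h2 : (ascPochhammer ℂ k).eval (1 / 2) = (k.factorial : ℂ) * (gCoef k : ℂ) := by
    clear h
    induction k with
    | zero => simp [gCoef]
    | succ k ih =>
      rw [ascPochhammer_succ_eval, ih, gCoef, Nat.factorial_succ]
      push_cast
      have : (2 * k + 2 : ℂ) ≠ 0 := by norm_cast
      field_simp
      ring
  rw [h2] at h
  exact mul_left_cancel₀ (by exact_mod_cast k.factorial_ne_zero) h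

theorem hasSum_gCoef {v : ℂ} (hv : ‖v‖ < 1) :
    HasSum (fun k => (gCoef k : ℂ) * v ^ (2 * k)) (tau v) := by
  have hv2 : ‖v ^ 2‖ < 1 := by rw [norm_pow]; exact pow_lt_one₀ (norm_nonneg _) hv two_ne_zero
  have h := (one_div_one_sub_cpow_hasFPowerSeriesOnBall_zero (1 / 2)).hasSum
    (y := v ^ 2) (by
      rw [Metric.mem_eball, edist_zero_right, ← ofReal_norm, ENNReal.ofReal_lt_one]; exact hv2)
  simp only [FormalMultilinearSeries.ofScalars_apply_eq, choose_eq_gCoef, zero_add, smul_eq_mul, ← pow_mul] at h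
  convert! h using 1
  have h1 : (1 : ℂ) - v ^ 2 = (1 + v) * (1 - v) := by ring
  have h2 := arg_one_add_mem_Ioo hv
  have h3 := arg_one_add_mem_Ioo (z := -v) (by rwa [norm_neg])
  rw [← sub_eq_add_neg] at h3
  rw [h1, cpow_def_of_ne_zero (mul_ne_zero (one_add_ne_zero' hv) (one_sub_ne_zero' hv)),
    Complex.log_mul (one_add_ne_zero' hv) (one_sub_ne_zero' hv), tau, one_div (cexp _), ← exp_neg]
  · congr 1; ring
  · constructor <;> linarith [h2.1, h2.2, h3.1, h3.2]

/-! ### Legendre functions in the Joukowski variable -/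

/-- The solution of the Legendre three-term recurrence
`(j+2) y_{j+2} = (2j+3) s y_{j+1} - (j+1) y_j` with `y_0 = a`, `y_1 = b`. -/
noncomputable def legRec (a b s : ℂ) : ℕ → ℂ
  | 0 => a
  | 1 => b
  | j + 2 => ((2 * j + 3) * s * legRec a b s (j + 1) - (j + 1) * legRec a b s j) / (j + 2)

theorem legRec_unique {a b s : ℂ} {y : ℕ → ℂ} (h0 : y 0 = a) (h1 : y 1 = b)
    (hy : ∀ j : ℕ, ((j : ℂ) + 2) * y (j + 2) = (2 * j + 3) * s * y (j + 1) - (j + 1) * y j) (j : ℕ) :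
    y j = legRec a b s j := by
  induction j using Nat.twoStepInduction with
  | zero => rw [h0, legRec]
  | one => rw [h1, legRec]
  | more j ih1 ih2 =>
    rw [legRec, ← ih1, ← ih2, ← hy]
    have : (j : ℂ) + 2 ≠ 0 := by norm_cast
    field_simp

theorem legRec_differentiable {a b : ℂ → ℂ} {U : Set ℂ} {s : ℂ → ℂ} (ha : DifferentiableOn ℂ a U)
    (hb : DifferentiableOn ℂ b U)
    (hs : DifferentiableOn ℂ s U) (j : ℕ) : DifferentiableOn ℂ (fun v => legRec (a v) (b v) (s v) j) U := by
  induction j using Nat.twoStepInduction with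
  | zero => simpa only [legRec] using ha
  | one => simpa only [legRec] using hb
  | more j ih1 ih2 =>
    simp only [legRec]
    exact ((((hs.const_mul _)).mul ih2).sub (ih1.const_mul _)).div_const _

/-- The polynomial with `P_j((v + 1/v)/2) = v^{-j} pTil j (v²)`, see `legP_eq`. -/
noncomputable def pTil (j : ℕ) (x : ℂ) : ℂ :=
  ∑ k ∈ Finset.range (j + 1), (gCoef k : ℂ) * gCoef (j - k) * x ^ k

open PowerSeries in
/-- The differential equation of the generating series `(1 - xX)^{-1/2}`. -/
theorem gSeries_deriv (x : ℂ) (G : PowerSeries ℂ) (hG : G = PowerSeries.mk fun k => (gCoef k : ℂ) * x ^ k) :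
    C 2 * (1 - C x * X) * derivative ℂ G = C x * G := by
  ext k
  rw [mul_assoc, coeff_C_mul, sub_mul, one_mul, map_sub, mul_assoc, coeff_C_mul, coeff_C_mul,
    coeff_derivative, hG, coeff_mk, coeff_mk]
  cases k with
  | zero => simp [gCoef]
  | succ k =>
    rw [coeff_succ_X_mul, coeff_derivative, coeff_mk, gCoef.eq_2 (k + 1)]
    push_cast
    have : (k : ℂ) + 1 + 1 ≠ 0 := by norm_cast
    rw [show (2 * ((k : ℂ) + 1) + 2) = 2 * (k + 1 + 1) by ring]
    field_simp
    ring

open PowerSeries in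
/-- The Legendre recurrence for `pTil`. The generating series of `pTil` is the product of the series
`(1 - xX)^{-1/2}` and `(1 - X)^{-1/2}`, whose differential equations give the recurrence. -/
theorem pTil_rec (j : ℕ) (x : ℂ) :
    ((j : ℂ) + 2) * pTil (j + 2) x = (2 * j + 3) / 2 * (1 + x) * pTil (j + 1) x - (j + 1) * x * pTil j x := by
  set G : PowerSeries ℂ := PowerSeries.mk fun k => (gCoef k : ℂ) * x ^ k with hG
  set G1 : PowerSeries ℂ := PowerSeries.mk fun k => (gCoef k : ℂ) * 1 ^ k with hG1
  have h := gSeries_deriv x G hG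
  have h1 := gSeries_deriv 1 G1 hG1
  have hF : ∀ j, coeff j (G * G1) = pTil j x := by
    intro j
    rw [coeff_mul, Finset.Nat.sum_antidiagonal_eq_sum_range_succ_mk, pTil]
    refine Finset.sum_congr rfl fun k _ => ?_
    simp [hG, hG1]; ring
  have hmain : C 2 * derivative ℂ (G * G1) = C (2 * (1 + x)) * (X * derivative ℂ (G * G1))
      - C (2 * x) * (X * (X * derivative ℂ (G * G1)))
      + C (1 + x) * (G * G1) - C (2 * x) * (X * (G * G1)) := by
    rw [Derivation.leibniz]
    have hC2 : (C 2 : PowerSeries ℂ) = 2 := rfl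
    simp only [smul_eq_mul, map_mul, map_add, map_one, hC2] at *
    linear_combination (1 - X) * G1 * h + (1 - C x * X) * G * h1
  have h2 := congrArg (coeff (j + 1)) hmain
  simp only [map_add (coeff (j + 1)), map_sub, coeff_C_mul, coeff_succ_X_mul, coeff_derivative, hF] at h2
  cases j with
  | zero =>
    rw [coeff_zero_X_mul] at h2
    push_cast at h2 ⊢
    linear_combination (1 / 2) * h2
  | succ j =>
    rw [coeff_succ_X_mul, coeff_derivative, hF] at h2
    push_cast at h2 ⊢
    linear_combination (1 / 2) * h2

/-- Legendre polynomials in the Joukowski variable. -/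
theorem legP_eq {v : ℂ} (hv : v ≠ 0) (j : ℕ) :
    legRec 1 ((v + v⁻¹) / 2) ((v + v⁻¹) / 2) j = v⁻¹ ^ j * pTil j (v ^ 2) := by
  symm
  refine legRec_unique (y := fun j => v⁻¹ ^ j * pTil j (v ^ 2)) ?_ ?_ ?_ j
  · simp [pTil, gCoef]
  · simp [pTil, gCoef, Finset.sum_range_succ]; field_simp; ring
  · intro j
    have := pTil_rec j (v ^ 2)
    have e : ((j : ℂ) + 2) * (v⁻¹ ^ (j + 2) * pTil (j + 2) (v ^ 2)) = v⁻¹ ^ (j + 2) * (((j : ℂ) + 2) * pTil (j + 2) (v ^ 2)) := by ring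
    rw [e, this]
    have hu : v⁻¹ * v = 1 := inv_mul_cancel₀ hv
    have h1 : v⁻¹ ^ (j + 2) * v ^ 2 = v⁻¹ ^ j := by
      linear_combination v⁻¹ ^ j * (v⁻¹ * v + 1) * hu
    have h2 : v⁻¹ ^ (j + 1) * v⁻¹ = v⁻¹ ^ (j + 2) := by ring
    have h3 : v⁻¹ ^ (j + 1) * v = v⁻¹ ^ (j + 2) * v ^ 2 := by
      linear_combination -v⁻¹ ^ (j + 1) * v * hu
    linear_combination (-(j + 1)) * pTil j (v ^ 2) * h1 - (2 * j + 3) / 2 * pTil (j+1) (v^2) * h2 - (2 * j + 3) / 2 * pTil (j+1) (v^2) * h3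

/-- The power series with `Q_j((v + 1/v)/2) = v^{j+1} qSer j (v²)`, see `legQ_eq`. -/
noncomputable def qSer (j : ℕ) (x : ℂ) : ℂ := ∑' k, (gCoef k : ℂ) * dCoef (j + k) * x ^ k

theorem dCoef_le_two (k : ℕ) : dCoef k ≤ 2 := (dCoef_antitone (Nat.zero_le k)).trans_eq (by simp [dCoef])

theorem summable_of_bound {A : ℕ → ℝ} {C : ℝ} (hA : ∀ k, |A k| ≤ C) {x : ℂ} (hx : ‖x‖ < 1) :
    Summable fun k => (A k : ℂ) * x ^ k := by
  refine Summable.of_norm_bounded ((summable_geometric_of_lt_one (norm_nonneg x) hx).mul_left C) fun k => ?_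
  rw [norm_mul, norm_pow, norm_real]
  exact mul_le_mul_of_nonneg_right (hA k) (by positivity)

theorem qSer_summable (j : ℕ) (i : ℕ) {x : ℂ} (hx : ‖x‖ < 1) :
    Summable fun k => (gCoef (k + i) : ℂ) * dCoef (j + k) * x ^ k := by
  have := summable_of_bound (A := fun k => gCoef (k + i) * dCoef (j + k)) (C := 2) (fun k => by
    rw [abs_of_pos (mul_pos (gCoef_pos _) (dCoef_pos _))]
    nlinarith [gCoef_le_one (k + i), dCoef_le_two (j + k), gCoef_pos (k + i), dCoef_pos (j + k)]) hx
  simpa using this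

theorem qSer_rec (j : ℕ) {x : ℂ} (hx : ‖x‖ < 1) :
    ((j : ℂ) + 2) * x * qSer (j + 2) x + (j + 1) * qSer j x = (2 * j + 3) / 2 * (1 + x) * qSer (j + 1) x := by
  have s0 : ∀ j, qSer j x = gCoef 0 * dCoef j + x * ∑' k, (gCoef (k + 1) : ℂ) * dCoef (j + 1 + k) * x ^ k := by
    intro j
    have := qSer_summable j 0 hx
    simp only [add_zero] at this
    rw [qSer, this.tsum_eq_zero_add, ← tsum_mul_left]
    simp only [add_zero, pow_zero, mul_one]
    congr 1
    refine tsum_congr fun k => ?_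
    rw [show j + (k + 1) = j + 1 + k by ring]; ring
  have key : ((j : ℂ) + 2) * qSer (j + 2) x + (j + 1) * ∑' k, (gCoef (k + 1) : ℂ) * dCoef (j + 1 + k) * x ^ k
      = (2 * j + 3) / 2 * (∑' k, (gCoef (k + 1) : ℂ) * dCoef (j + 2 + k) * x ^ k + qSer (j + 1) x) := by
    have a1 := qSer_summable (j + 2) 0 hx
    have a2 := qSer_summable (j + 1) 1 hx
    have a3 := qSer_summable (j + 2) 1 hx
    have a4 := qSer_summable (j + 1) 0 hx
    simp only [add_zero] at a1 a4
    rw [qSer, qSer, ← tsum_mul_left, ← tsum_mul_left, ← (a1.mul_left _).tsum_add (a2.mul_left _), ← a3.tsum_add a4, ← tsum_mul_left]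
    refine tsum_congr fun k => ?_
    rw [show j + 2 + k = (j + 1 + k) + 1 by ring, gCoef, dCoef]
    push_cast
    have h1 : (2 * k + 2 : ℂ) ≠ 0 := by norm_cast
    have h2 : (2 * (j + 1 + k) + 3 : ℂ) ≠ 0 := by norm_cast
    field_simp
    ring
  have e1 := s0 j
  have e2 := s0 (j + 1)
  rw [show j + 1 + 1 = j + 2 by ring] at e2
  have d1 : (j + 1) * (dCoef j : ℂ) = (2 * j + 3) / 2 * dCoef (j + 1) := by
    rw [dCoef]; push_cast
    have h2 : (2 * j + 3 : ℂ) ≠ 0 := by norm_cast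
    have h3 : (j * 2 + 3 : ℂ) ≠ 0 := by norm_cast
    field_simp
  simp only [gCoef.eq_1, ofReal_one, one_mul] at e1 e2
  linear_combination x * key + (j + 1) * e1 - (2 * j + 3) / 2 * e2 + d1

theorem qSer_zero {v : ℂ} (hv : ‖v‖ < 1) : v * qSer 0 (v ^ 2) = logRatio v := by
  have h2 := (hasSum_taylorSeries_log hv).add (hasSum_taylorSeries_neg_log hv)
  have hinj : Function.Injective (fun k : ℕ => 2 * k + 1) := fun a b h => by simpa using h
  rw [← hinj.hasSum_iff] at h2
  · rw [logRatio, sub_eq_add_neg, ← h2.tsum_eq, qSer, ← tsum_mul_left]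
    refine tsum_congr fun k => ?_
    have := gCoef_mul_dCoef k
    simp only [Function.comp, zero_add]
    rw [← ofReal_mul, this, show 2 * k + 1 + 1 = 2 * (k + 1) by ring, pow_mul (-1 : ℂ)]
    push_cast
    norm_num
    ring
  · intro n hn
    have : Even n := by
      rw [← Nat.not_odd_iff_even]
      rintro ⟨k, rfl⟩
      exact hn ⟨k, rfl⟩
    obtain ⟨k, rfl⟩ := this
    rw [← two_mul, pow_succ, pow_mul]
    simp
    ring

theorem qSer_one {x : ℂ} (hx : ‖x‖ < 1) : x * qSer 1 x = (1 + x) / 2 * qSer 0 x - 1 := by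
  have a1 := qSer_summable 0 0 hx
  have a2 := qSer_summable 1 1 hx
  have a3 := qSer_summable 1 0 hx
  simp only [add_zero, zero_add] at a1 a3
  have s0 : qSer 0 x = 2 + x * ∑' k, (gCoef (k + 1) : ℂ) * dCoef (1 + k) * x ^ k := by
    simp only [qSer, zero_add]
    rw [a1.tsum_eq_zero_add, ← tsum_mul_left]
    simp only [pow_zero, mul_one, gCoef.eq_1, dCoef.eq_1]
    congr 1
    · norm_num
    refine tsum_congr fun k => ?_
    rw [show 1 + k = k + 1 by ring]; ring
  have key : qSer 1 x = (1 / 2) * (∑' k, (gCoef (k + 1) : ℂ) * dCoef (1 + k) * x ^ k + qSer 0 x) := by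
    simp only [qSer, zero_add]
    rw [← a2.tsum_add a1, ← tsum_mul_left]
    refine tsum_congr fun k => ?_
    rw [show 1 + k = k + 1 by ring, gCoef, dCoef]
    push_cast
    have h1 : (2 * k + 2 : ℂ) ≠ 0 := by norm_cast
    have h2 : (2 * k + 3 : ℂ) ≠ 0 := by norm_cast
    field_simp
    ring
  linear_combination x * key - (1 / 2) * s0

/-- Legendre functions of the second kind `Q_j = P_j Q_0 - W_j`, normalised by `Q_0 = logRatio v`: in
the Joukowski variable they decay like `v^{j+1}`. -/
theorem legQ_eq {v : ℂ} (hv0 : v ≠ 0) (hv : ‖v‖ < 1) (j : ℕ) :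
    legRec 1 ((v + v⁻¹) / 2) ((v + v⁻¹) / 2) j * logRatio v - legRec 0 1 ((v + v⁻¹) / 2) j * 1
      = v ^ (j + 1) * qSer j (v ^ 2) := by
  have hx : ‖v ^ 2‖ < 1 := by rw [norm_pow]; exact pow_lt_one₀ (norm_nonneg _) hv two_ne_zero
  set s := (v + v⁻¹) / 2 with hs
  have hL := qSer_zero hv
  have h1 : ∀ j, v ^ (j + 1) * qSer j (v ^ 2) = legRec (logRatio v) (s * logRatio v - 1) s j := by
    refine legRec_unique ?_ ?_ ?_
    · simpa using hL
    · have := qSer_one hx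
      rw [← hL, hs]
      field_simp
      linear_combination 2*this
    · intro j
      have := qSer_rec j hx
      have h3 : v ^ (j + 1 + 1) * v⁻¹ = v ^ (j + 1) := by rw [pow_succ, mul_assoc, mul_inv_cancel₀ hv0, mul_one]
      rw [hs]
      linear_combination v ^ (j + 1) * this - (2 * j + 3) / 2 * qSer (j + 1) (v ^ 2) * h3
  have h2 : ∀ j, legRec 1 s s j * logRatio v - legRec 0 1 s j * 1 = legRec (logRatio v) (s * logRatio v - 1) s j := by
    refine legRec_unique ?_ ?_ ?_
    · simp [legRec]
    · simp [legRec]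
    · intro j
      have : (j : ℂ) + 2 ≠ 0 := by norm_cast
      simp only [legRec]
      field_simp
      ring
  rw [h1, h2]

/-! ### Uniform asymptotics of the Legendre functions -/

/-- Dominated convergence: power series in `v²` with bounded coefficients converging to those of
`tau` converge to `tau` uniformly on closed discs inside the unit disc. -/
theorem unif_tendsto_tau {A : ℕ → ℕ → ℝ} (hA : ∀ m k, |A m k| ≤ 2)
    (hlim : ∀ k, Tendsto (fun m => A m k) atTop (𝓝 (gCoef k))) {V0 : ℝ} (hV0 : 0 ≤ V0) (hV1 : V0 < 1)
    {η : ℝ} (hη : 0 < η) :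
    ∀ᶠ m in atTop, ∀ v : ℂ, ‖v‖ ≤ V0 → ‖∑' k, (A m k : ℂ) * (v ^ 2) ^ k - tau v‖ ≤ η := by
  have hx1 : V0 ^ 2 < 1 := pow_lt_one₀ hV0 hV1 two_ne_zero
  have hgeo : Summable fun k => 3 * (V0 ^ 2) ^ k :=
    (summable_geometric_of_lt_one (by positivity) hx1).mul_left 3
  have hbd : ∀ m k, |A m k - gCoef k| ≤ 3 := fun m k => by
    have h1 := abs_le.1 (hA m k)
    have h2 := gCoef_pos k
    have h3 := gCoef_le_one k
    rw [abs_le]; constructor <;> linarith [h1.1, h1.2]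
  have hbd' : ∀ m k, |A m k - gCoef k| * (V0 ^ 2) ^ k ≤ 3 * (V0 ^ 2) ^ k := fun m k =>
    mul_le_mul_of_nonneg_right (hbd m k) (by positivity)
  have hT : Tendsto (fun m => ∑' k, |A m k - gCoef k| * (V0 ^ 2) ^ k) atTop (𝓝 (∑' _ : ℕ, (0 : ℝ))) := by
    refine tendsto_tsum_of_dominated_convergence hgeo (fun k => ?_) (Eventually.of_forall fun m k => ?_)
    · have := (((hlim k).sub_const (gCoef k)).abs.mul_const ((V0 ^ 2) ^ k))
      simpa using this
    · rw [Real.norm_of_nonneg (by positivity)]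
      exact hbd' m k
  rw [tsum_zero] at hT
  filter_upwards [hT.eventually_le_const hη] with m hm v hv
  have hv1 : ‖v‖ < 1 := hv.trans_lt hV1
  have hx : ‖v ^ 2‖ < 1 := by rw [norm_pow]; exact pow_lt_one₀ (norm_nonneg _) hv1 two_ne_zero
  have s1 := summable_of_bound (hA m) hx
  have s2 := hasSum_gCoef hv1
  simp only [pow_mul] at s2
  rw [← s2.tsum_eq, ← s1.tsum_sub s2.summable]
  have hsb : Summable fun k => |A m k - gCoef k| * (V0 ^ 2) ^ k :=
    Summable.of_nonneg_of_le (fun k => by positivity) (hbd' m) hgeo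
  refine (tsum_of_norm_bounded hsb.hasSum fun k => ?_).trans hm
  rw [← sub_mul, norm_mul, ← ofReal_sub, norm_real, norm_pow, norm_pow, Real.norm_eq_abs]
  gcongr

theorem dCoef_le_succ (m : ℕ) : dCoef m ≤ 2 * dCoef (m + 1) := by
  have := dCoef_pos m
  rw [dCoef]
  have : (1 / 2 : ℝ) ≤ (2 * m + 2) / (2 * m + 3) := by
    rw [div_le_div_iff₀ (by norm_num) (by positivity)]; linarith [m.cast_nonneg (α := ℝ)]
  nlinarith

theorem gCoef_le_succ (m : ℕ) : gCoef m ≤ 2 * gCoef (m + 1) := by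
  have := gCoef_pos m
  rw [gCoef]
  have : (1 / 2 : ℝ) ≤ (2 * m + 1) / (2 * m + 2) := by
    rw [div_le_div_iff₀ (by norm_num) (by positivity)]; linarith [m.cast_nonneg (α := ℝ)]
  nlinarith

theorem pTil_eq_tsum (j : ℕ) (c : ℝ) (x : ℂ) :
    pTil j x / c = ∑' k, ((if k ≤ j then gCoef k * gCoef (j - k) / c else 0 : ℝ) : ℂ) * x ^ k := by
  rw [tsum_eq_sum (s := Finset.range (j + 1)), pTil, Finset.sum_div]
  · refine Finset.sum_congr rfl fun k hk => ?_
    rw [if_pos (by simpa [Nat.lt_succ_iff] using hk)]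
    push_cast; ring
  · intro k hk
    rw [if_neg (by simpa [Nat.lt_succ_iff] using hk)]
    simp

theorem qSer_div (j : ℕ) (c : ℝ) (x : ℂ) :
    qSer j x / c = ∑' k, ((gCoef k * dCoef (j + k) / c : ℝ) : ℂ) * x ^ k := by
  rw [qSer, ← tsum_div_const]
  refine tsum_congr fun k => ?_
  push_cast; ring

/-- Both degrees `m` and `m + 1` are normalised by the same constant `d_{m+1}`, since consecutive `d_k`
have ratio tending to `1`. -/
theorem asymp_q (e : ℕ) (he : e ≤ 1) {V0 : ℝ} (hV0 : 0 ≤ V0) (hV1 : V0 < 1) {η : ℝ} (hη : 0 < η) :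
    ∀ᶠ m in atTop, ∀ v : ℂ, ‖v‖ ≤ V0 → ‖qSer (m + e) (v ^ 2) / dCoef (m + 1) - tau v‖ ≤ η := by
  simp only [qSer_div]
  refine unif_tendsto_tau (A := fun m k => gCoef k * dCoef (m + e + k) / dCoef (m + 1)) (fun m k => ?_) (fun k => ?_) hV0 hV1 hη
  · have h1 := gCoef_pos k
    have h2 := gCoef_le_one k
    have h3 := dCoef_pos (m + e + k)
    have h4 : dCoef (m + e + k) ≤ dCoef m := dCoef_antitone (by omega)
    have h5 := dCoef_le_succ m
    have h6 := dCoef_pos (m + 1)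
    rw [abs_of_pos (by positivity), div_le_iff₀ h6]
    nlinarith
  · have h1 := ((tendsto_dCoef_ratio (e + k)).div (tendsto_dCoef_ratio 1) one_ne_zero).const_mul (gCoef k)
    rw [div_one, mul_one] at h1
    refine h1.congr fun m => ?_
    have := (dCoef_pos m).ne'
    have := (dCoef_pos (m + 1)).ne'
    simp only [Pi.div_apply, ← add_assoc]
    field_simp

/-- Both degrees `m` and `m + 1` are normalised by the same constant `g_{m+1}`, since consecutive `g_k`
have ratio tending to `1`. -/
theorem asymp_p (e : ℕ) (he : e ≤ 1) {V0 : ℝ} (hV0 : 0 ≤ V0) (hV1 : V0 < 1) {η : ℝ} (hη : 0 < η) :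
    ∀ᶠ m in atTop, ∀ v : ℂ, ‖v‖ ≤ V0 → ‖pTil (m + e) (v ^ 2) / gCoef (m + 1) - tau v‖ ≤ η := by
  simp only [pTil_eq_tsum]
  refine unif_tendsto_tau (A := fun m k => if k ≤ m + e then gCoef k * gCoef (m + e - k) / gCoef (m + 1) else 0) (fun m k => ?_) (fun k => ?_) hV0 hV1 hη
  · have h6 := gCoef_pos (m + 1)
    split_ifs with hk
    · have h1 := gCoef_pos k
      have h2 := gCoef_pos (m + e - k)
      have h4 : gCoef k * gCoef (m + e - k) ≤ gCoef (m + e) := by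
        have := gCoef_mul_le k (m + e - k)
        rwa [Nat.add_sub_cancel' hk] at this
      have h5 : gCoef (m + e) ≤ 2 * gCoef (m + 1) := by
        rcases Nat.le_one_iff_eq_zero_or_eq_one.1 he with rfl | rfl
        · exact gCoef_le_succ m
        · linarith
      rw [abs_of_pos (by positivity), div_le_iff₀ h6]
      linarith
    · simp
  · have h0 : Tendsto (fun m : ℕ => gCoef m / gCoef (m + (k + 1 - e))) atTop (𝓝 1) := tendsto_gCoef_ratio _
    have h1 := (h0.comp (tendsto_sub_atTop_nat k) |>.comp (tendsto_add_atTop_nat e)).const_mul (gCoef k)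
    rw [mul_one] at h1
    refine h1.congr' ?_
    filter_upwards [eventually_ge_atTop k] with m hm
    simp only [Function.comp]
    rw [if_pos (by omega), show m + e - k + (k + 1 - e) = m + 1 by omega]
    ring

/-! ### The deformed variable -/

theorem norm_sinh_sq (u : ℂ) : ‖sinh u‖ ^ 2 = Real.sinh u.re ^ 2 + Real.sin u.im ^ 2 := by
  conv_lhs => rw [← re_add_im u]
  rw [sinh_add, sinh_mul_I, cosh_mul_I, ← ofReal_sinh, ← ofReal_cosh, ← ofReal_sin, ← ofReal_cos, ← normSq_eq_norm_sq,
    show ((Real.sinh u.re : ℂ) * (Real.cos u.im : ℂ) + (Real.cosh u.re : ℂ) * ((Real.sin u.im : ℂ) * I))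
      = ((Real.sinh u.re * Real.cos u.im : ℝ) : ℂ) + ((Real.cosh u.re * Real.sin u.im : ℝ) : ℂ) * I by push_cast; ring,
    normSq_add_mul_I]
  have h1 := Real.cosh_sq u.re
  have h2 := Real.sin_sq_add_cos_sq u.im
  linear_combination (Real.sin u.im) ^ 2 * h1 + (Real.sinh u.re) ^ 2 * h2

theorem convexOn_sinh : ConvexOn ℝ (Ici 0) Real.sinh := by
  refine MonotoneOn.convexOn_of_deriv (convex_Ici 0) Real.continuous_sinh.continuousOn
    Real.differentiable_sinh.differentiableOn ?_
  rw [Real.deriv_sinh, interior_Ici]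
  intro x hx y hy hxy
  exact Real.cosh_strictMonoOn.monotoneOn (mem_Ici.2 (le_of_lt hx)) (mem_Ici.2 (le_of_lt hy)) hxy

/-- By convexity of `sinh`. -/
theorem eps_sinh_lt {ε ρ x : ℝ} (hε : 0 ≤ ε) (hρ : ε * Real.sinh ρ < ρ) (hx : 0 < x) (hxρ : x ≤ ρ) :
    ε * Real.sinh x < x := by
  have hρ0 : 0 < ρ := hx.trans_le hxρ
  have h := convexOn_sinh.2 (mem_Ici.2 le_rfl) (mem_Ici.2 hρ0.le)
    (show 0 ≤ 1 - x / ρ by rw [sub_nonneg, div_le_one hρ0]; exact hxρ) (show 0 ≤ x / ρ by positivity) (by ring)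
  simp only [smul_eq_mul, mul_zero, zero_add, Real.sinh_zero, div_mul_cancel₀ x hρ0.ne'] at h
  calc ε * Real.sinh x ≤ ε * (x / ρ * Real.sinh ρ) := mul_le_mul_of_nonneg_left h hε
    _ = (x / ρ) * (ε * Real.sinh ρ) := by ring
    _ < (x / ρ) * ρ := mul_lt_mul_of_pos_left hρ (by positivity)
    _ = x := div_mul_cancel₀ x hρ0.ne'

/-- The only zero of `u - c sinh u`, `|c| ≤ ε`, in the strip `|Re u| ≤ ρ` is `u = 0`; this follows from
`|sinh u|² = sinh² (Re u) + sin² (Im u)`. -/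
theorem eps_norm_sinh_lt {ε ρ : ℝ} (hε : 0 ≤ ε) (hρ : ε * Real.sinh ρ < ρ) (hρ0 : 0 < ρ) {u : ℂ} (hu : u ≠ 0)
    (hre : |u.re| ≤ ρ) : ε * ‖sinh u‖ < ‖u‖ := by
  have hε1 : ε < 1 := by
    by_contra hcon
    have := Real.self_le_sinh_iff.2 hρ0.le
    nlinarith
  rw [← sq_lt_sq₀ (by positivity) (norm_nonneg _), mul_pow, norm_sinh_sq, ← normSq_eq_norm_sq, normSq_apply]
  have h1 : u.re ≠ 0 → ε ^ 2 * Real.sinh u.re ^ 2 < u.re ^ 2 := by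
    intro h0
    have := eps_sinh_lt hε hρ (abs_pos.2 h0) hre
    have h2 : (ε * Real.sinh |u.re|) ^ 2 < |u.re| ^ 2 :=
      pow_lt_pow_left₀ this (mul_nonneg hε (Real.sinh_nonneg_iff.2 (abs_nonneg _))) two_ne_zero
    rw [sq_abs, ← Real.abs_sinh, mul_pow, sq_abs] at h2
    exact h2
  have h2 : u.im ≠ 0 → ε ^ 2 * Real.sin u.im ^ 2 < u.im ^ 2 := by
    intro h0
    have h3 := Real.sin_sq_lt_sq h0
    have h4 : ε ^ 2 ≤ 1 := pow_le_one₀ hε hε1.le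
    nlinarith [sq_nonneg (Real.sin u.im)]
  by_cases hr : u.re = 0
  · have hi : u.im ≠ 0 := fun hi => hu (Complex.ext hr hi)
    have := h2 hi
    rw [hr]; simp; nlinarith
  · by_cases hi : u.im = 0
    · have := h1 hr
      rw [hi]; simp; nlinarith
    · have := h1 hr
      have := h2 hi
      nlinarith

/-- The entire function `sinh x / x`. -/
noncomputable def shc : ℂ → ℂ := dslope sinh 0

theorem differentiable_shc : Differentiable ℂ shc := by
  rw [← differentiableOn_univ, shc, differentiableOn_dslope univ_mem]
  exact differentiable_sinh.differentiableOn

theorem mul_shc (x : ℂ) : x * shc x = sinh x := by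
  have := sub_smul_dslope sinh 0 x
  simpa [shc] using this

theorem shc_zero : shc 0 = 1 := by simp [shc]

theorem shc_neg (x : ℂ) : shc (-x) = shc x := by
  by_cases hx : x = 0
  · simp [hx]
  · have h1 := mul_shc (-x)
    have h2 := mul_shc x
    rw [sinh_neg] at h1
    exact mul_left_cancel₀ hx (by linear_combination -h1 - h2)

/-- The Joukowski map `v ↦ (v + 1/v)/2`. -/
noncomputable def jouk (v : ℂ) : ℂ := (v + v⁻¹) / 2

/-- The exponent `iλ(v - 1/v)/4` of the deformed variable; it is odd under `v ↦ 1/v`. -/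
noncomputable def etaF (lam : ℝ) (v : ℂ) : ℂ := I * lam * (v - v⁻¹) / 4

/-- The deformed variable `V_t = v · exp(t iλ(v - 1/v)/4)`, which joins `V_0 = v` to `V = V_1`. -/
noncomputable def bigV (lam : ℝ) (t : ℝ) (v : ℂ) : ℂ := v * exp (t * etaF lam v)

/-- The quotient `(1/V_t - V_t)/(1/v - v)` with the singularities at `v = ±1` removed, see
`bigV_inv_sub`. -/
noncomputable def kFun (lam : ℝ) (t : ℝ) (v : ℂ) : ℂ :=
  cosh (t * etaF lam v) + I * lam / 2 * jouk v * t * shc (t * etaF lam v)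

theorem jouk_inv (v : ℂ) : jouk v⁻¹ = jouk v := by rw [jouk, jouk, inv_inv, add_comm]

theorem etaF_inv (lam : ℝ) (v : ℂ) : etaF lam v⁻¹ = - etaF lam v := by rw [etaF, etaF, inv_inv]; ring

theorem bigV_inv (lam t : ℝ) (v : ℂ) : bigV lam t v⁻¹ = (bigV lam t v)⁻¹ := by
  rw [bigV, bigV, etaF_inv, mul_neg, exp_neg, mul_inv]

theorem kFun_inv (lam t : ℝ) (v : ℂ) : kFun lam t v⁻¹ = kFun lam t v := by
  rw [kFun, kFun, etaF_inv, jouk_inv, mul_neg, cosh_neg, shc_neg]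

theorem bigV_ne_zero {lam t : ℝ} {v : ℂ} (hv : v ≠ 0) : bigV lam t v ≠ 0 := mul_ne_zero hv (exp_ne_zero _)

theorem bigV_inv_sub (lam t : ℝ) {v : ℂ} :
    (bigV lam t v)⁻¹ - bigV lam t v = (v⁻¹ - v) * kFun lam t v := by
  have h := mul_shc (t * etaF lam v)
  rw [bigV, mul_inv, ← exp_neg, kFun, ← cosh_add_sinh (t * etaF lam v), ← cosh_sub_sinh (t * etaF lam v)]
  have : (v⁻¹ - v) * (I * lam / 2 * jouk v * t * shc (t * etaF lam v)) = - (v + v⁻¹) * (t * etaF lam v * shc (t * etaF lam v)) := by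
    rw [jouk, etaF]; ring
  rw [h] at this
  linear_combination -this

/-- The open annulus `e^{-ρ} < |v| < e^ρ`. -/
def annU (ρ : ℝ) : Set ℂ := {v | Real.exp (-ρ) < ‖v‖ ∧ ‖v‖ < Real.exp ρ}

theorem isOpen_annU (ρ : ℝ) : IsOpen (annU ρ) :=
  (isOpen_lt continuous_const continuous_norm).inter (isOpen_lt continuous_norm continuous_const)

theorem annU_ne_zero {ρ : ℝ} {v : ℂ} (hv : v ∈ annU ρ) : v ≠ 0 :=
  norm_pos_iff.1 ((Real.exp_pos _).trans hv.1)

/-- A zero `v = e^w ≠ ±1` means `V_t = ±1`, so that a translate `u` of `w` by a multiple of `πi` is a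
nonzero number with `|u| = t (λ/2) |sinh u|`, contradicting `eps_norm_sinh_lt`. -/
theorem kFun_ne_zero {lam ρ t : ℝ} (hl : 0 ≤ lam) (hρ0 : 0 < ρ) (hρ : lam / 2 * Real.sinh ρ < ρ)
    (ht0 : 0 ≤ t) (ht1 : t ≤ 1) {v : ℂ} (hv : v ∈ annU ρ) : kFun lam t v ≠ 0 := by
  have hv0 := annU_ne_zero hv
  by_cases hvv : v⁻¹ = v
  · have hsq : v ^ 2 = 1 := by rw [sq]; nth_rw 1 [← hvv]; exact inv_mul_cancel₀ hv0
    have he : etaF lam v = 0 := by rw [etaF, hvv]; simp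
    have : jouk v = v := by rw [jouk, hvv]; ring
    rw [kFun, he, mul_zero, cosh_zero, shc_zero, this, mul_one]
    intro h0
    have hre : (1 + I * lam / 2 * v * t).re = 1 := by
      rcases sq_eq_one_iff.1 hsq with rfl | rfl
      · simp
      · simp
    rw [h0] at hre; simp at hre
  · intro h0
    have hV := bigV_inv_sub lam t (v := v)
    rw [h0, mul_zero, sub_eq_zero] at hV
    set w := log v with hw
    have hvw : v = exp w := (exp_log hv0).symm
    have hVw : bigV lam t v = exp (w + t * etaF lam v) := by rw [bigV, exp_add, ← hvw]
    have hη : etaF lam v = I * (lam / 2) * sinh w := by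
      rw [etaF, hvw, ← exp_neg, sinh]; ring
    have h1 : exp (2 * (w + t * etaF lam v)) = 1 := by
      rw [two_mul, exp_add, ← hVw]
      nth_rw 1 [← hV]
      exact inv_mul_cancel₀ (bigV_ne_zero hv0)
    obtain ⟨k, hk⟩ := Complex.exp_eq_one_iff.1 h1
    have hk2 : w - k * (Real.pi * I) = -(t * (I * (lam / 2) * sinh w)) := by
      rw [← hη]; linear_combination (1 / 2) * hk
    set u := w - k * (Real.pi * I) with hu
    have hsu : ‖sinh u‖ = ‖sinh w‖ := by
      rw [hu, sinh_antiperiodic.sub_int_mul_eq]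
      rw [norm_mul]
      rcases Int.even_or_odd k with hk | hk
      · simp [Int.negOnePow_even k hk]
      · simp [Int.negOnePow_odd k hk]
    have hun : ‖u‖ = t * (lam / 2) * ‖sinh u‖ := by
      rw [hsu, hk2, norm_neg, norm_mul, norm_mul, norm_mul, norm_I, one_mul, norm_real, Real.norm_of_nonneg ht0,
        show ((lam : ℂ) / 2) = ((lam / 2 : ℝ) : ℂ) by push_cast; rfl, norm_real, Real.norm_of_nonneg (by positivity)]
      ring
    have hu0 : u ≠ 0 := by
      intro hu0
      apply hvv
      rw [hvw, ← exp_neg]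
      refine Complex.exp_eq_exp_iff_exists_int.2 ⟨-k, ?_⟩
      push_cast
      linear_combination (-2) * hu0
    have hre : |u.re| ≤ ρ := by
      have : u.re = Real.log ‖v‖ := by
        rw [hu, hw]; simp [log_re]
      rw [this, abs_le]
      have hvp := norm_pos_iff.2 hv0
      constructor
      · rw [Real.le_log_iff_exp_le hvp]; exact hv.1.le
      · rw [Real.log_le_iff_le_exp hvp]; exact hv.2.le
    have := eps_norm_sinh_lt (by positivity) hρ hρ0 hu0 hre
    have h3 : t * (lam / 2) * ‖sinh u‖ ≤ 1 * (lam / 2) * ‖sinh u‖ := by gcongr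
    linarith

/-- The continuation of `logRatio V - logRatio v` to a symmetric function on the annulus, see `mFun_eq`,
written as the integral of the `t`-derivative of `logRatio V_t`. -/
noncomputable def mFun (lam : ℝ) (v : ℂ) : ℂ := -(I * lam / 2) * ∫ t in (0 : ℝ)..1, (kFun lam t v)⁻¹

theorem mFun_inv (lam : ℝ) (v : ℂ) : mFun lam v⁻¹ = mFun lam v := by
  simp only [mFun, kFun_inv]

theorem differentiableOn_jouk : DifferentiableOn ℂ jouk {0}ᶜ := by
  unfold jouk
  exact (differentiableOn_id.add (differentiableOn_inv.mono fun v hv => hv)).div_const 2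

theorem differentiableOn_etaF (lam : ℝ) : DifferentiableOn ℂ (etaF lam) {0}ᶜ := by
  unfold etaF
  exact ((differentiableOn_id.sub (differentiableOn_inv.mono fun v hv => hv)).const_mul _).div_const 4

theorem differentiableOn_bigV (lam t : ℝ) : DifferentiableOn ℂ (bigV lam t) {0}ᶜ := by
  unfold bigV
  exact differentiableOn_id.mul ((differentiableOn_etaF lam).const_mul _).cexp

theorem differentiableOn_mFun {lam ρ : ℝ} (hl : 0 ≤ lam) (hρ0 : 0 < ρ) (hρ : lam / 2 * Real.sinh ρ < ρ) :
    DifferentiableOn ℂ (mFun lam) (annU ρ) := by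
  have hsub : annU ρ ⊆ {0}ᶜ := fun v hv => annU_ne_zero hv
  have h01 : uIcc (0 : ℝ) 1 = Icc 0 1 := uIcc_of_le zero_le_one
  refine (differentiableOn_param_integral (isOpen_annU ρ) (G := fun v t => (kFun lam t v)⁻¹) ?_ ?_).const_mul _
  · refine ContinuousOn.inv₀ ?_ ?_
    · have hj := (differentiableOn_jouk.mono hsub).continuousOn
      have he := ((differentiableOn_etaF lam).mono hsub).continuousOn
      have hj' : ContinuousOn (fun p : ℂ × ℝ => jouk p.1) (annU ρ ×ˢ uIcc 0 1) :=
        hj.comp continuousOn_fst fun p hp => hp.1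
      have he' : ContinuousOn (fun p : ℂ × ℝ => etaF lam p.1) (annU ρ ×ˢ uIcc 0 1) :=
        he.comp continuousOn_fst fun p hp => hp.1
      have ht : ContinuousOn (fun p : ℂ × ℝ => (p.2 : ℂ)) (annU ρ ×ˢ uIcc 0 1) := by fun_prop
      unfold kFun
      exact (continuous_cosh.comp_continuousOn (ht.mul he')).add
        (((continuousOn_const.mul hj').mul ht).mul (differentiable_shc.continuous.comp_continuousOn (ht.mul he')))
    · rintro ⟨v, t⟩ ⟨hv, ht⟩
      rw [h01] at ht
      exact kFun_ne_zero hl hρ0 hρ ht.1 ht.2 hv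
  · intro t ht
    rw [h01] at ht
    refine DifferentiableOn.fun_inv ?_ fun v hv => kFun_ne_zero hl hρ0 hρ ht.1 ht.2 hv
    have hj := differentiableOn_jouk.mono hsub
    have he := (differentiableOn_etaF lam).mono hsub
    unfold kFun
    exact (he.const_mul _).ccosh.add (((hj.const_mul _).mul_const _).mul
      (differentiable_shc.comp_differentiableOn (he.const_mul _)))

theorem mFun_eq {lam ρ : ℝ} (hl : 0 ≤ lam) (hρ0 : 0 < ρ) (hρ : lam / 2 * Real.sinh ρ < ρ) {v : ℂ}
    (hv : v ∈ annU ρ) (hV : ∀ t ∈ Icc (0 : ℝ) 1, ‖bigV lam t v‖ < 1) :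
    mFun lam v = logRatio (bigV lam 1 v) - logRatio v := by
  have hv0 := annU_ne_zero hv
  have hbv0 : bigV lam 0 v = v := by simp [bigV]
  have hvv : v⁻¹ - v ≠ 0 := by
    have h := hV 0 (by simp)
    rw [hbv0] at h
    intro h0
    have h1 := congrArg norm (sub_eq_zero.1 h0)
    rw [norm_inv] at h1
    have := one_lt_inv_iff₀.2 ⟨norm_pos_iff.2 hv0, h⟩
    linarith
  have hder : ∀ t ∈ uIcc (0 : ℝ) 1, HasDerivAt (fun t : ℝ => logRatio (bigV lam t v))
      (-(I * lam / 2) * (kFun lam t v)⁻¹) t := by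
    intro t ht
    rw [uIcc_of_le zero_le_one] at ht
    have hVt := hV t ht
    have hk := kFun_ne_zero hl hρ0 hρ ht.1 ht.2 hv
    have hd : HasDerivAt (fun t : ℝ => bigV lam t v) (bigV lam t v * etaF lam v) t := by
      have h1 : HasDerivAt (fun t : ℝ => (t : ℂ) * etaF lam v) (etaF lam v) t := by
        simpa using (ofRealCLM.hasDerivAt (x := t)).mul_const (etaF lam v)
      have := h1.cexp.const_mul v
      simpa [bigV, mul_assoc] using this
    have h1 : HasDerivAt (fun t : ℝ => log (1 + bigV lam t v)) _ t :=
      (hd.const_add 1).clog_real (mem_slitPlane_of_norm_lt_one hVt)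
    have h2 : HasDerivAt (fun t : ℝ => log (1 - bigV lam t v)) _ t :=
      (hd.const_sub 1).clog_real (by
        rw [sub_eq_add_neg]
        exact mem_slitPlane_of_norm_lt_one (by rwa [norm_neg]))
    have h12 := h1.sub h2
    refine h12.congr_deriv ?_
    symm
    have a1 := one_add_ne_zero' hVt
    have a2 := one_sub_ne_zero' hVt
    have a3 := bigV_ne_zero (lam := lam) (t := t) hv0
    have hid := bigV_inv_sub lam t (v := v)
    have hη : -(I * lam / 2) * (v⁻¹ - v) = 2 * etaF lam v := by rw [etaF]; ring
    set W := bigV lam t v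
    rw [← div_eq_mul_inv, div_sub_div _ _ a1 a2, div_eq_div_iff hk (mul_ne_zero a1 a2)]
    have hid2 : 1 - W ^ 2 = W * (v⁻¹ - v) * kFun lam t v := by
      rw [mul_assoc, ← hid, mul_sub, mul_inv_cancel₀ a3]; ring
    apply mul_right_cancel₀ hvv
    linear_combination (-(I * lam / 2) * (v⁻¹ - v)) * hid2 + W * (v⁻¹ - v) * kFun lam t v * hη
  have hcont : ContinuousOn (fun t : ℝ => -(I * lam / 2) * (kFun lam t v)⁻¹) (uIcc (0 : ℝ) 1) := by
    refine continuousOn_const.mul (ContinuousOn.inv₀ ?_ ?_)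
    · have := differentiable_shc.continuous
      unfold kFun
      fun_prop
    · intro t ht
      rw [uIcc_of_le zero_le_one] at ht
      exact kFun_ne_zero hl hρ0 hρ ht.1 ht.2 hv
  have := intervalIntegral.integral_eq_sub_of_hasDerivAt hder hcont.intervalIntegrable
  rw [intervalIntegral.integral_const_mul, hbv0] at this
  exact this

/-! ### The Cauchy transform -/

/-- The point `1 - 2vx + v²` with `|v| < 1`, `|x| ≤ 1` is not a negative real number or zero. -/
theorem denom_mem_slitPlane {v : ℂ} (hv : ‖v‖ < 1) {x : ℝ} (hx : x ∈ Icc (-1 : ℝ) 1) :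
    1 - 2 * v * x + v ^ 2 ∈ slitPlane := by
  set θ := Real.arccos x with hθ
  have hc : (x : ℂ) = cos θ := by rw [← ofReal_cos, hθ, Real.cos_arccos hx.1 hx.2]
  set a := exp (θ * I) with ha
  set b := exp (-θ * I) with hb
  have hab : a * b = 1 := by rw [ha, hb, ← exp_add]; simp
  have hcc : 2 * (x : ℂ) = a + b := by rw [hc, Complex.cos]; ring
  have hna : ‖-(v * a)‖ < 1 := by rw [norm_neg, norm_mul, ha, norm_exp_ofReal_mul_I, mul_one]; exact hv
  have hnb : ‖-(v * b)‖ < 1 := by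
    rw [norm_neg, norm_mul, hb, ← ofReal_neg, norm_exp_ofReal_mul_I, mul_one]; exact hv
  have hfac : 1 - 2 * v * x + v ^ 2 = (1 + -(v * a)) * (1 + -(v * b)) := by
    linear_combination (-v) * hcc - v ^ 2 * hab
  have h1 := arg_one_add_mem_Ioo hna
  have h2 := arg_one_add_mem_Ioo hnb
  have n1 := one_add_ne_zero' hna
  have n2 := one_add_ne_zero' hnb
  rw [mem_slitPlane_iff_arg, hfac]
  refine ⟨?_, mul_ne_zero n1 n2⟩
  rw [arg_mul n1 n2 ⟨by linarith [h1.1, h2.1], by linarith [h1.2, h2.2]⟩]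
  linarith [h1.2, h2.2]

theorem denom_ne_zero {v : ℂ} (hv : ‖v‖ < 1) {x : ℝ} (hx : x ∈ Icc (-1 : ℝ) 1) :
    1 - 2 * v * x + v ^ 2 ≠ 0 := slitPlane_ne_zero (denom_mem_slitPlane hv hx)

theorem jouk_sub {v : ℂ} (hv0 : v ≠ 0) (x : ℂ) : jouk v - x = (1 - 2 * v * x + v ^ 2) / (2 * v) := by
  rw [jouk]; field_simp; ring

theorem jouk_sub_ne_zero {v : ℂ} (hv0 : v ≠ 0) (hv : ‖v‖ < 1) {x : ℝ} (hx : x ∈ Icc (-1 : ℝ) 1) :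
    jouk v - x ≠ 0 := by
  rw [jouk_sub hv0]
  exact div_ne_zero (denom_ne_zero hv hx) (mul_ne_zero two_ne_zero hv0)

theorem continuousOn_cauchy {v : ℂ} (hv0 : v ≠ 0) (hv : ‖v‖ < 1) :
    ContinuousOn (fun x : ℝ => (jouk v - x)⁻¹) (uIcc (-1) 1) := by
  refine ContinuousOn.inv₀ (by fun_prop) fun x hx => ?_
  rw [uIcc_of_le (by norm_num)] at hx
  exact jouk_sub_ne_zero hv0 hv hx

theorem integral_cauchy_one {v : ℂ} (hv0 : v ≠ 0) (hv : ‖v‖ < 1) :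
    ∫ x in (-1 : ℝ)..1, (jouk v - x)⁻¹ = 2 * logRatio v := by
  have hder : ∀ x ∈ uIcc (-1 : ℝ) 1, HasDerivAt (fun x : ℝ => -log (1 - 2 * v * x + v ^ 2)) ((jouk v - x)⁻¹) x := by
    intro x hx
    rw [uIcc_of_le (by norm_num)] at hx
    have h1 : HasDerivAt (fun x : ℝ => 1 - 2 * v * (x : ℂ) + v ^ 2) (-(2 * v)) x := by
      simpa using ((((ofRealCLM.hasDerivAt (x := x)).const_mul (2 * v)).const_sub 1).add_const (v ^ 2))
    refine (h1.clog_real (denom_mem_slitPlane hv hx)).neg.congr_deriv ?_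
    rw [jouk_sub hv0, inv_div, neg_div, neg_neg]
  rw [intervalIntegral.integral_eq_sub_of_hasDerivAt hder (continuousOn_cauchy hv0 hv).intervalIntegrable]
  have e1 : (1 : ℂ) - 2 * v * (1 : ℝ) + v ^ 2 = (1 - v) * (1 - v) := by push_cast; ring
  have e2 : (1 : ℂ) - 2 * v * (-1 : ℝ) + v ^ 2 = (1 + v) * (1 + v) := by push_cast; ring
  have h2 := arg_one_add_mem_Ioo hv
  have h3 := arg_one_add_mem_Ioo (z := -v) (by rwa [norm_neg])
  rw [← sub_eq_add_neg] at h3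
  have n1 := one_add_ne_zero' hv
  have n2 := one_sub_ne_zero' hv
  rw [e1, e2, Complex.log_mul n1 n1 ⟨by linarith [h2.1], by linarith [h2.2]⟩,
    Complex.log_mul n2 n2 ⟨by linarith [h3.1], by linarith [h3.2]⟩, logRatio]
  ring

/-- The difference quotient `(H z - H x)/(z - x)` of an entire function `H`, written as an integral so
that it is defined at `z = x` too; see `dq_mul`. -/
noncomputable def dq (H : ℂ → ℂ) (z : ℂ) (x : ℝ) : ℂ := ∫ τ in (0 : ℝ)..1, deriv H (x + τ * (z - x))

theorem differentiable_deriv {H : ℂ → ℂ} (hH : Differentiable ℂ H) : Differentiable ℂ (deriv H) := by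
  rw [← differentiableOn_univ]
  exact hH.differentiableOn.deriv isOpen_univ

theorem dq_mul {H : ℂ → ℂ} (hH : Differentiable ℂ H) (z : ℂ) (x : ℝ) : (z - x) * dq H z x = H z - H x := by
  have hder : ∀ τ ∈ uIcc (0 : ℝ) 1, HasDerivAt (fun τ : ℝ => H (x + τ * (z - x))) ((z - x) * deriv H (x + τ * (z - x))) τ := by
    intro τ _
    have h1 : HasDerivAt (fun τ : ℝ => (x : ℂ) + τ * (z - x)) (z - x) τ := by
      simpa using (((ofRealCLM.hasDerivAt (x := τ)).mul_const (z - x)).const_add (x : ℂ))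
    have h2 := (hH (x + τ * (z - x))).hasDerivAt.comp_of_eq τ h1 rfl
    rw [mul_comm]
    exact h2
  have hc := (differentiable_deriv hH).continuous
  have := intervalIntegral.integral_eq_sub_of_hasDerivAt hder (Continuous.intervalIntegrable (by fun_prop) _ _)
  rw [intervalIntegral.integral_const_mul] at this
  rw [dq, this]; simp

/-- The integral of the difference quotient of `H` over `[-1,1]`, an entire function of `z`. -/
noncomputable def kEnt (H : ℂ → ℂ) (z : ℂ) : ℂ := ∫ x in (-1 : ℝ)..1, dq H z x

theorem continuous_dq {H : ℂ → ℂ} (hH : Differentiable ℂ H) :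
    Continuous fun p : ℂ × ℝ => dq H p.1 p.2 := by
  have hc := (differentiable_deriv hH).continuous
  unfold dq
  exact intervalIntegral.continuous_parametric_intervalIntegral_of_continuous'
    (f := fun (p : ℂ × ℝ) (τ : ℝ) => deriv H (p.2 + τ * (p.1 - p.2))) (by unfold Function.uncurry; fun_prop) 0 1

theorem differentiable_kEnt {H : ℂ → ℂ} (hH : Differentiable ℂ H) : Differentiable ℂ (kEnt H) := by
  have hd := differentiable_deriv hH
  have hc := hd.continuous
  rw [← differentiableOn_univ]
  refine differentiableOn_param_integral isOpen_univ (continuous_dq hH).continuousOn fun x _ => ?_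
  refine differentiableOn_param_integral isOpen_univ (G := fun (z : ℂ) (τ : ℝ) => deriv H (x + τ * (z - x))) (Continuous.continuousOn (by fun_prop)) fun τ _ => ?_
  exact (hd.comp (by fun_prop)).differentiableOn

/-- The Cauchy transform of `H` on `[-1,1]`. -/
noncomputable def cauchyT (H : ℂ → ℂ) (z : ℂ) : ℂ := ∫ x in (-1 : ℝ)..1, H x * (z - x)⁻¹

/-- The factor `2 logRatio v` is the Cauchy transform of the constant function `1`. -/
theorem cauchyT_eq {H : ℂ → ℂ} (hH : Differentiable ℂ H) {v : ℂ} (hv0 : v ≠ 0) (hv : ‖v‖ < 1) :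
    cauchyT H (jouk v) = 2 * logRatio v * H (jouk v) - kEnt H (jouk v) := by
  have h1 : kEnt H (jouk v) = ∫ x in (-1 : ℝ)..1, (H (jouk v) * (jouk v - x)⁻¹ - H x * (jouk v - x)⁻¹) := by
    refine intervalIntegral.integral_congr fun x hx => ?_
    rw [uIcc_of_le (by norm_num)] at hx
    have := jouk_sub_ne_zero hv0 hv hx
    have h2 := dq_mul hH (jouk v) x
    rw [← sub_mul, ← h2, mul_comm, inv_mul_cancel_left₀ this]
  have hc := continuousOn_cauchy hv0 hv
  have hHc := hH.continuous
  rw [h1, intervalIntegral.integral_sub, intervalIntegral.integral_const_mul, integral_cauchy_one hv0 hv, cauchyT]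
  · ring
  · exact (continuousOn_const.mul hc).intervalIntegrable
  · exact (ContinuousOn.mul (by fun_prop) hc).intervalIntegrable

/-- The quotient `(z^n - x^n)/(z - x)` is a polynomial of degree `< n` in `x`, which is orthogonal to `H`. -/
theorem cauchyT_decay {H : ℂ → ℂ} (hH : Continuous H) {n : ℕ}
    (horth : ∀ k < n, ∫ x in (-1 : ℝ)..1, H x * (x : ℂ) ^ k = 0) {v : ℂ} (hv0 : v ≠ 0) (hv : ‖v‖ < 1) :
    (jouk v) ^ n * cauchyT H (jouk v) = ∫ x in (-1 : ℝ)..1, H x * (x : ℂ) ^ n * (jouk v - x)⁻¹ := by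
  have hc := continuousOn_cauchy hv0 hv
  have h1 : ∀ x ∈ uIcc (-1 : ℝ) 1, (jouk v) ^ n * (H x * (jouk v - x)⁻¹) - H x * (x : ℂ) ^ n * (jouk v - x)⁻¹ =
      ∑ i ∈ Finset.range n, (jouk v) ^ i * (H x * (x : ℂ) ^ (n - 1 - i)) := by
    intro x hx
    rw [uIcc_of_le (by norm_num)] at hx
    have h0 := jouk_sub_ne_zero hv0 hv hx
    have h2 := Commute.geom_sum₂_mul (Commute.all (jouk v) (x : ℂ)) n
    have : (jouk v) ^ n * (H x * (jouk v - x)⁻¹) - H x * (x : ℂ) ^ n * (jouk v - x)⁻¹ = H x * ((jouk v) ^ n - x ^ n) * (jouk v - x)⁻¹ := by ring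
    rw [this, ← h2, ← mul_assoc, mul_assoc, mul_inv_cancel₀ h0, mul_one, Finset.mul_sum]
    refine Finset.sum_congr rfl fun i _ => by ring
  have i1 : IntervalIntegrable (fun x : ℝ => (jouk v) ^ n * (H x * (jouk v - x)⁻¹)) volume (-1) 1 :=
    (continuousOn_const.mul (ContinuousOn.mul (by fun_prop) hc)).intervalIntegrable
  have i2 : IntervalIntegrable (fun x : ℝ => H x * (x : ℂ) ^ n * (jouk v - x)⁻¹) volume (-1) 1 :=
    (ContinuousOn.mul (by fun_prop) hc).intervalIntegrable
  rw [cauchyT, ← intervalIntegral.integral_const_mul, ← sub_eq_zero, ← intervalIntegral.integral_sub i1 i2,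
    intervalIntegral.integral_congr h1, intervalIntegral.integral_finsetSum]
  · refine Finset.sum_eq_zero fun i hi => ?_
    rw [intervalIntegral.integral_const_mul, horth _ (by have := Finset.mem_range.1 hi; omega), mul_zero]
  · intro i _
    exact Continuous.intervalIntegrable (by fun_prop) _ _

/-- The holomorphic cofactor of `v^{n+1}` in the Cauchy transform, see `cauchyT_eq_cHol`. -/
noncomputable def cHol (H : ℂ → ℂ) (n : ℕ) (v : ℂ) : ℂ :=
  2 ^ (n + 1) * ((1 + v ^ 2) ^ n)⁻¹ * ∫ x in (-1 : ℝ)..1, H x * (x : ℂ) ^ n * (1 - 2 * v * x + v ^ 2)⁻¹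

theorem one_add_sq_ne_zero {v : ℂ} (hv : ‖v‖ < 1) : 1 + v ^ 2 ≠ 0 :=
  one_add_ne_zero' (by rw [norm_pow]; exact pow_lt_one₀ (norm_nonneg _) hv two_ne_zero)

theorem differentiableOn_cHol {H : ℂ → ℂ} (hH : Continuous H) (n : ℕ) :
    DifferentiableOn ℂ (cHol H n) (ball 0 1) := by
  have hb : ∀ v ∈ ball (0 : ℂ) 1, ‖v‖ < 1 := fun v hv => by simpa using hv
  have h11 : uIcc (-1 : ℝ) 1 = Icc (-1) 1 := uIcc_of_le (by norm_num)
  unfold cHol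
  refine DifferentiableOn.mul (DifferentiableOn.const_mul (DifferentiableOn.fun_inv (by fun_prop) fun v hv => pow_ne_zero _ (one_add_sq_ne_zero (hb v hv))) _) ?_
  refine differentiableOn_param_integral isOpen_ball (G := fun v x => H x * (x : ℂ) ^ n * (1 - 2 * v * x + v ^ 2)⁻¹) ?_ ?_
  · refine ContinuousOn.mul (by fun_prop) (ContinuousOn.inv₀ (by fun_prop) ?_)
    rintro ⟨v, x⟩ ⟨hv, hx⟩
    rw [h11] at hx
    exact denom_ne_zero (hb v hv) hx
  · intro x hx
    rw [h11] at hx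
    exact DifferentiableOn.const_mul (DifferentiableOn.fun_inv (by fun_prop) fun v hv => denom_ne_zero (hb v hv) hx) _

theorem cauchyT_eq_cHol {H : ℂ → ℂ} (hH : Continuous H) {n : ℕ}
    (horth : ∀ k < n, ∫ x in (-1 : ℝ)..1, H x * (x : ℂ) ^ k = 0) {v : ℂ} (hv0 : v ≠ 0) (hv : ‖v‖ < 1) :
    cauchyT H (jouk v) = v ^ (n + 1) * cHol H n v := by
  have h := cauchyT_decay hH horth hv0 hv
  have hj : jouk v = (1 + v ^ 2) / (2 * v) := by rw [jouk]; field_simp; ring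
  have hj0 : jouk v ≠ 0 := by
    rw [hj]; exact div_ne_zero (one_add_sq_ne_zero hv) (mul_ne_zero two_ne_zero hv0)
  have h2 : ∫ x in (-1 : ℝ)..1, H x * (x : ℂ) ^ n * (jouk v - x)⁻¹
      = 2 * v * ∫ x in (-1 : ℝ)..1, H x * (x : ℂ) ^ n * (1 - 2 * v * x + v ^ 2)⁻¹ := by
    rw [← intervalIntegral.integral_const_mul]
    refine intervalIntegral.integral_congr fun x _ => ?_
    rw [jouk_sub hv0, inv_div, div_eq_mul_inv]; ring
  rw [h2] at h
  apply mul_left_cancel₀ (pow_ne_zero n hj0)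
  rw [h, cHol, hj, div_pow, mul_pow]
  have := one_add_sq_ne_zero hv
  field_simp
  ring

/-- The polynomial `v^{n-1} q((v + 1/v)/2)` for `q` of degree `< n`, see `eval_eq_aHol`. -/
noncomputable def aHol (q : Polynomial ℂ) (n : ℕ) (v : ℂ) : ℂ :=
  ∑ i ∈ Finset.range n, q.coeff i * ((1 + v ^ 2) / 2) ^ i * v ^ (n - 1 - i)

theorem differentiable_aHol (q : Polynomial ℂ) (n : ℕ) : Differentiable ℂ (aHol q n) := by
  unfold aHol; fun_prop

theorem eval_eq_aHol {q : Polynomial ℂ} {n : ℕ} (hq : q.degree < n) {v : ℂ} (hv0 : v ≠ 0) :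
    q.eval (jouk v) * v ^ n = v * aHol q n v := by
  rcases Nat.eq_zero_or_pos n with rfl | hn
  · have : q = 0 := by rw [← Polynomial.degree_eq_bot]; simpa using hq
    simp [this, aHol]
  have hq' : q.natDegree < n := by
    rcases eq_or_ne q 0 with rfl | h0
    · simpa using hn
    · rwa [Polynomial.natDegree_lt_iff_degree_lt h0]
  rw [Polynomial.eval_eq_sum_range' hq', aHol, Finset.sum_mul, Finset.mul_sum]
  refine Finset.sum_congr rfl fun i hi => ?_
  have hi' := Finset.mem_range.1 hi
  have e : v ^ n = v * v ^ (n - 1 - i) * v ^ i := by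
    rw [← pow_succ', ← pow_add]; congr 1; omega
  have h2 : jouk v * v = (1 + v ^ 2) / 2 := by rw [jouk]; field_simp; ring
  rw [e, ← h2, mul_pow]; ring

/-! ### Absorption of the error terms -/

/-- Two symmetric functions whose main terms on `|v| = R` are `v e^{±u} (A ∓ C)` and whose errors are
a small multiple of `|vA| + |vC|`: by `outer_L2_le` the main terms are at most a fraction of
themselves in `L²`, hence they vanish. -/
theorem absorb {R : ℝ} (hR : 0 < R) (hR1 : R < 1) {Zp Zm A C u : ℂ → ℂ} {M δ : ℝ}
    (hZp : IsInner R Zp) (hZm : IsInner R Zm) (hA : DifferentiableOn ℂ A (ball 0 1))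
    (hC : DifferentiableOn ℂ C (ball 0 1)) (hu : DifferentiableOn ℂ u (ball 0 1)) (hδ : 0 ≤ δ)
    (hMp : ∀ v ∈ sphere (0 : ℂ) R, ‖exp (u v)‖ ≤ M) (hMm : ∀ v ∈ sphere (0 : ℂ) R, ‖exp (-u v)‖ ≤ M)
    (hEp : ∀ v ∈ sphere (0 : ℂ) R, ‖Zp v - v * (exp (u v) * (A v - C v))‖ ≤ δ * (‖v * A v‖ + ‖v * C v‖))
    (hEm : ∀ v ∈ sphere (0 : ℂ) R, ‖Zm v - v * (exp (-u v) * (A v + C v))‖ ≤ δ * (‖v * A v‖ + ‖v * C v‖))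
    (hδM : δ * M ≤ 1 / 8) {v : ℂ} (hv : v ∈ sphere (0 : ℂ) R) : A v = 0 := by
  set Hp : ℂ → ℂ := fun v => exp (u v) * (A v - C v) with hHp
  set Hm : ℂ → ℂ := fun v => exp (-u v) * (A v + C v) with hHm
  have dHp : DifferentiableOn ℂ Hp (ball 0 1) := hu.cexp.mul (hA.sub hC)
  have dHm : DifferentiableOn ℂ Hm (ball 0 1) := hu.neg.cexp.mul (hA.add hC)
  have hsph : sphere (0 : ℂ) R ⊆ ball 0 1 := fun w hw => by
    rw [mem_sphere] at hw; rw [mem_ball, hw]; exact hR1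
  have hmem : ∀ t, circleMap 0 R t ∈ sphere (0 : ℂ) R := circleMap_mem_sphere 0 hR.le
  have h1 := outer_L2_le hR hR1 (Er := fun v => Zp v - v * Hp v) hZp dHp (fun v _ => by ring)
  have h2 := outer_L2_le hR hR1 (Er := fun v => Zm v - v * Hm v) hZm dHm (fun v _ => by ring)
  have hAC : ∀ v ∈ sphere (0 : ℂ) R, ‖v * A v‖ + ‖v * C v‖ ≤ M * (‖v * Hp v‖ + ‖v * Hm v‖) := by
    intro v hv
    have e1 : exp (-u v) * exp (u v) = 1 := by rw [← exp_add]; simp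
    have eA : v * A v = 2⁻¹ * (exp (-u v) * (v * Hp v) + exp (u v) * (v * Hm v)) := by
      simp only [hHp, hHm]
      linear_combination (-v * A v) * e1
    have eC : v * C v = 2⁻¹ * (exp (u v) * (v * Hm v) - exp (-u v) * (v * Hp v)) := by
      simp only [hHp, hHm]
      linear_combination (-v * C v) * e1
    have b1 : ‖exp (-u v) * (v * Hp v)‖ ≤ M * ‖v * Hp v‖ := by
      rw [norm_mul]; exact mul_le_mul_of_nonneg_right (hMm v hv) (norm_nonneg _)
    have b2 : ‖exp (u v) * (v * Hm v)‖ ≤ M * ‖v * Hm v‖ := by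
      rw [norm_mul]; exact mul_le_mul_of_nonneg_right (hMp v hv) (norm_nonneg _)
    have b3 : ‖v * A v‖ ≤ 2⁻¹ * (‖exp (-u v) * (v * Hp v)‖ + ‖exp (u v) * (v * Hm v)‖) := by
      rw [eA, norm_mul, norm_inv, norm_ofNat]; gcongr; exact norm_add_le _ _
    have b4 : ‖v * C v‖ ≤ 2⁻¹ * (‖exp (u v) * (v * Hm v)‖ + ‖exp (-u v) * (v * Hp v)‖) := by
      rw [eC, norm_mul, norm_inv, norm_ofNat]; gcongr; exact norm_sub_le _ _
    linarith
  have key : ∀ v ∈ sphere (0 : ℂ) R, ∀ e : ℂ, ‖e‖ ≤ δ * (‖v * A v‖ + ‖v * C v‖) →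
      ‖e‖ ^ 2 ≤ (1 / 32) * (‖v * Hp v‖ ^ 2 + ‖v * Hm v‖ ^ 2) := by
    intro v hv e he
    have h3 : ‖e‖ ≤ 1 / 8 * (‖v * Hp v‖ + ‖v * Hm v‖) :=
      calc ‖e‖ ≤ δ * (M * (‖v * Hp v‖ + ‖v * Hm v‖)) := he.trans (mul_le_mul_of_nonneg_left (hAC v hv) hδ)
        _ = δ * M * (‖v * Hp v‖ + ‖v * Hm v‖) := by ring
        _ ≤ _ := mul_le_mul_of_nonneg_right hδM (by positivity)
    have h4 := pow_le_pow_left₀ (norm_nonneg e) h3 2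
    nlinarith [sq_nonneg (‖v * Hp v‖ - ‖v * Hm v‖)]
  have cont_circ : ∀ F : ℂ → ℂ, ContinuousOn F (sphere 0 R) → Continuous fun t => F (circleMap 0 R t) :=
    fun F hF => hF.comp_continuous (continuous_circleMap 0 R) hmem
  have cp : ContinuousOn (fun v => v * Hp v) (sphere 0 R) := continuousOn_id.mul (dHp.continuousOn.mono hsph)
  have cm : ContinuousOn (fun v => v * Hm v) (sphere 0 R) := continuousOn_id.mul (dHm.continuousOn.mono hsph)
  have hsub : sphere (0 : ℂ) R ⊆ closedBall 0 R⁻¹ \ ball 0 R := by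
    intro w hw
    rw [mem_sphere] at hw
    have : R ≤ R⁻¹ := hR1.le.trans (one_lt_inv_iff₀.2 ⟨hR, hR1⟩).le
    exact ⟨by rw [mem_closedBall, hw]; exact this, by rw [mem_ball, hw]; exact lt_irrefl _⟩
  have kp := cont_circ _ cp
  have km := cont_circ _ cm
  have kep := cont_circ _ ((hZp.cont.mono hsub).sub cp)
  have kem := cont_circ _ ((hZm.cont.mono hsub).sub cm)
  have hpi : (0 : ℝ) ≤ 2 * Real.pi := Real.two_pi_pos.le
  have e1 := intervalIntegral.integral_mono_on (μ := volume) hpi ((kep.norm.pow 2).intervalIntegrable _ _)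
    ((((kp.norm.pow 2).add (km.norm.pow 2)).const_mul (1 / 32)).intervalIntegrable _ _)
    (fun t _ => key _ (hmem t) _ (hEp _ (hmem t)))
  have e2 := intervalIntegral.integral_mono_on (μ := volume) hpi ((kem.norm.pow 2).intervalIntegrable _ _)
    ((((kp.norm.pow 2).add (km.norm.pow 2)).const_mul (1 / 32)).intervalIntegrable _ _)
    (fun t _ => key _ (hmem t) _ (hEm _ (hmem t)))
  have e3 := intervalIntegral.integral_add (μ := volume) ((kp.norm.pow 2).intervalIntegrable 0 (2 * Real.pi)) ((km.norm.pow 2).intervalIntegrable _ _)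
  rw [intervalIntegral.integral_const_mul] at e1 e2
  have hnp : 0 ≤ ∫ t in (0 : ℝ)..2 * Real.pi, ‖circleMap 0 R t * Hp (circleMap 0 R t)‖ ^ 2 :=
    intervalIntegral.integral_nonneg hpi fun t _ => by positivity
  have hnm : 0 ≤ ∫ t in (0 : ℝ)..2 * Real.pi, ‖circleMap 0 R t * Hm (circleMap 0 R t)‖ ^ 2 :=
    intervalIntegral.integral_nonneg hpi fun t _ => by positivity
  have hle : ∫ t in (0 : ℝ)..2 * Real.pi, (‖circleMap 0 R t * Hp (circleMap 0 R t)‖ ^ 2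
      + ‖circleMap 0 R t * Hm (circleMap 0 R t)‖ ^ 2) ≤ 0 := by
    simp only [Pi.add_apply, Pi.pow_apply, Pi.sub_apply] at e1 e2 e3
    linarith
  have hzero : ∀ t ∈ Icc 0 (2 * Real.pi), ‖circleMap 0 R t * Hp (circleMap 0 R t)‖ ^ 2
      + ‖circleMap 0 R t * Hm (circleMap 0 R t)‖ ^ 2 = 0 := by
    intro t ht
    by_contra hne
    have hpos := lt_of_le_of_ne (by positivity) (Ne.symm hne)
    exact absurd hle (not_le.2 (intervalIntegral.integral_pos Real.two_pi_pos
      ((kp.norm.pow 2).add (km.norm.pow 2)).continuousOn (fun t _ => by positivity) ⟨t, ht, hpos⟩))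
  have hv' : v ∈ sphere (0 : ℂ) |R| := by rwa [abs_of_pos hR]
  rw [← image_circleMap_Ioc] at hv'
  obtain ⟨t, ht, rfl⟩ := hv'
  have hz := hzero t ⟨ht.1.le, ht.2⟩
  have hz1 : ‖circleMap 0 R t * Hp (circleMap 0 R t)‖ = 0 := by
    have := sq_nonneg ‖circleMap 0 R t * Hm (circleMap 0 R t)‖
    exact pow_eq_zero_iff two_ne_zero |>.1 (le_antisymm (by linarith) (sq_nonneg _))
  have hz2 : ‖circleMap 0 R t * Hm (circleMap 0 R t)‖ = 0 := by
    have := sq_nonneg ‖circleMap 0 R t * Hp (circleMap 0 R t)‖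
    exact pow_eq_zero_iff two_ne_zero |>.1 (le_antisymm (by linarith) (sq_nonneg _))
  have hz3 := hAC _ hv
  rw [hz1, hz2, add_zero, mul_zero] at hz3
  have hz4 : ‖circleMap 0 R t * A (circleMap 0 R t)‖ = 0 :=
    le_antisymm (by linarith [norm_nonneg (circleMap 0 R t * C (circleMap 0 R t))]) (norm_nonneg _)
  exact (mul_eq_zero.1 (norm_eq_zero.1 hz4)).resolve_left (circleMap_ne_center hR.ne')

/-! ### The symmetric combinations -/

theorem isInner_of_annU {Z : ℂ → ℂ} {r ρ : ℝ} (hrρ : r < ρ)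
    (hd : DifferentiableOn ℂ Z (annU ρ)) (hs : ∀ v, Z v⁻¹ = Z v) : IsInner (Real.exp (-r)) Z := by
  have hsub : closedBall (0 : ℂ) (Real.exp (-r))⁻¹ \ ball 0 (Real.exp (-r)) ⊆ annU ρ := by
    rintro v ⟨hv1, hv2⟩
    rw [mem_closedBall_zero_iff, ← Real.exp_neg, neg_neg] at hv1
    rw [mem_ball_zero_iff, not_lt] at hv2
    exact ⟨(Real.exp_lt_exp.2 (by linarith)).trans_le hv2, hv1.trans_lt (Real.exp_lt_exp.2 hrρ)⟩
  exact ⟨hd.continuousOn.mono hsub, hd.mono fun v hv => hsub ⟨ball_subset_closedBall hv.1,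
    fun h' => hv.2 (ball_subset_closedBall h')⟩, fun v _ => hs v⟩

/-- The function `q(z) e^{iωz}`. -/
noncomputable def weighted (q : Polynomial ℂ) (ω : ℝ) (z : ℂ) : ℂ := q.eval z * exp (I * ω * z)

theorem differentiable_weighted (q : Polynomial ℂ) (ω : ℝ) : Differentiable ℂ (weighted q ω) := by
  unfold weighted
  exact q.differentiable.mul (differentiable_id.const_mul _).cexp

/-- The combination `2 q e^{iωz/2} Q_j - P_j e^{-iωz/2} C` of the Legendre functions at the Joukowski
image of `V` and the Cauchy transform `C` of `weighted q ω`, rewritten through `mFun` and `kEnt` so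
that its symmetry and holomorphy on the annulus are visible. Here `P_j` and the second solution
`W_j` of the recurrence are `legRec` with initial values `(1, s)` and `(0, 1)`. -/
noncomputable def innerX (lam ω : ℝ) (q : Polynomial ℂ) (j : ℕ) (v : ℂ) : ℂ :=
  2 * (q.eval (jouk v) * exp (I * ω * jouk v / 2)) *
      (legRec 1 (jouk (bigV lam 1 v)) (jouk (bigV lam 1 v)) j * mFun lam v
        - legRec 0 1 (jouk (bigV lam 1 v)) j)
    + legRec 1 (jouk (bigV lam 1 v)) (jouk (bigV lam 1 v)) j * exp (-(I * ω * jouk v / 2))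
      * kEnt (weighted q ω) (jouk v)

theorem innerX_inv (lam ω : ℝ) (q : Polynomial ℂ) (j : ℕ) (v : ℂ) :
    innerX lam ω q j v⁻¹ = innerX lam ω q j v := by
  simp only [innerX, bigV_inv, jouk_inv, mFun_inv]

theorem differentiableOn_innerX {lam ρ : ℝ} (ω : ℝ) (hl : 0 ≤ lam) (hρ0 : 0 < ρ)
    (hρ : lam / 2 * Real.sinh ρ < ρ) (q : Polynomial ℂ) (j : ℕ) :
    DifferentiableOn ℂ (innerX lam ω q j) (annU ρ) := by
  have hsub : annU ρ ⊆ {0}ᶜ := fun v hv => annU_ne_zero hv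
  have hj := differentiableOn_jouk.mono hsub
  have hs : DifferentiableOn ℂ (fun v => jouk (bigV lam 1 v)) (annU ρ) :=
    differentiableOn_jouk.comp ((differentiableOn_bigV lam 1).mono hsub)
      fun v hv => bigV_ne_zero (annU_ne_zero hv)
  have hP := legRec_differentiable (differentiableOn_const (1 : ℂ)) hs hs j
  have hW := legRec_differentiable (differentiableOn_const (0 : ℂ)) (differentiableOn_const (1 : ℂ)) hs j
  have hq : DifferentiableOn ℂ (fun v => q.eval (jouk v)) (annU ρ) := q.differentiable.comp_differentiableOn hj
  have hk : DifferentiableOn ℂ (fun v => kEnt (weighted q ω) (jouk v)) (annU ρ) :=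
    (differentiable_kEnt (differentiable_weighted q ω)).comp_differentiableOn hj
  have he : DifferentiableOn ℂ (fun v => I * ω * jouk v / 2) (annU ρ) := (hj.const_mul _).div_const 2
  unfold innerX
  exact (((hq.mul he.cexp).const_mul 2).mul ((hP.mul (differentiableOn_mFun hl hρ0 hρ)).sub hW)).add
    ((hP.mul he.neg.cexp).mul hk)

/-- The holomorphic factor of the term of `innerX` that comes from `q`. -/
noncomputable def outA (q : Polynomial ℂ) (ω : ℝ) (n : ℕ) (v : ℂ) : ℂ :=
  2 * dCoef n * aHol q n v * exp (I * ω * v / 2)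

/-- The holomorphic factor of the term of `innerX` that comes from the Cauchy transform. -/
noncomputable def outC (q : Polynomial ℂ) (ω : ℝ) (n : ℕ) (v : ℂ) : ℂ :=
  gCoef n * cHol (weighted q ω) n v * exp (-(I * ω * v / 2))

/-- The deformed variable is designed for this identity, which absorbs the oscillatory factor. -/
theorem bigV_pow_mul_exp (lam : ℝ) (n : ℕ) (v : ℂ) :
    bigV lam 1 v ^ n * exp (I * (n * lam : ℝ) * jouk v / 2) = v ^ n * exp (I * (n * lam : ℝ) * v / 2) := by
  rw [bigV, mul_pow, ← exp_nat_mul, mul_assoc, ← exp_add]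
  congr 2
  rw [etaF, jouk]
  push_cast
  ring

/-- Inside the unit disc, where `mFun` and `kEnt` are known, `innerX` splits into a Legendre function of
the second kind times `outA` and a Legendre polynomial times `outC`. -/
theorem innerX_eq {lam ρ : ℝ} {n : ℕ} (hl : 0 ≤ lam) (hρ0 : 0 < ρ)
    (hρ : lam / 2 * Real.sinh ρ < ρ) {q : Polynomial ℂ} (hq : q.degree < n)
    (horth : ∀ k < n, ∫ x in (-1 : ℝ)..1, weighted q (n * lam : ℝ) x * (x : ℂ) ^ k = 0)
    {v : ℂ} (hv : v ∈ annU ρ) (hV : ∀ t ∈ Icc (0 : ℝ) 1, ‖bigV lam t v‖ < 1) (j : ℕ) :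
    innerX lam (n * lam) q j v * bigV lam 1 v ^ n
      = bigV lam 1 v ^ (j + 1) * (v * outA q (n * lam) n v) * (qSer j (bigV lam 1 v ^ 2) / dCoef n)
        - (bigV lam 1 v)⁻¹ ^ j * bigV lam 1 v ^ n * bigV lam 1 v ^ n * (v * outC q (n * lam) n v)
          * (pTil j (bigV lam 1 v ^ 2) / gCoef n) := by
  have hv0 := annU_ne_zero hv
  have hV0 : bigV lam 1 v ≠ 0 := bigV_ne_zero hv0
  have hV1 : ‖bigV lam 1 v‖ < 1 := hV 1 (by simp)
  have hvn : ‖v‖ < 1 := by simpa [bigV] using hV 0 (by simp)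
  have h1 := legQ_eq hV0 hV1 j
  have h2 := legP_eq hV0 j
  have h3 := cauchyT_eq (differentiable_weighted q (n * lam)) hv0 hvn
  have h4 := cauchyT_eq_cHol (differentiable_weighted q (n * lam)).continuous horth hv0 hvn
  have h5 := eval_eq_aHol hq hv0
  have h6 := bigV_pow_mul_exp lam n v
  have h7 := mFun_eq hl hρ0 hρ hv hV
  have h8 : weighted q (n * lam) (jouk v) * exp (-(I * (n * lam : ℝ) * jouk v / 2))
      = q.eval (jouk v) * exp (I * (n * lam : ℝ) * jouk v / 2) := by
    rw [weighted, mul_assoc, ← exp_add]; congr 2; ring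
  have hd : (dCoef n : ℂ) ≠ 0 := by exact_mod_cast (dCoef_pos n).ne'
  have hg : (gCoef n : ℂ) ≠ 0 := by exact_mod_cast (gCoef_pos n).ne'
  have h9 : exp (-(I * (n * lam : ℝ) * jouk v / 2)) * v ^ n = bigV lam 1 v ^ n * exp (-(I * (n * lam : ℝ) * v / 2)) := by
    rw [exp_neg, exp_neg]
    field_simp [exp_ne_zero]
    linear_combination -h6
  rw [innerX, outA, outC, h7]
  change legRec 1 (jouk (bigV lam 1 v)) (jouk (bigV lam 1 v)) j * _ - legRec 0 1 (jouk (bigV lam 1 v)) j * 1 = _ at h1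
  change legRec 1 (jouk (bigV lam 1 v)) (jouk (bigV lam 1 v)) j = _ at h2
  have hk : kEnt (weighted q (n * lam)) (jouk v) = 2 * logRatio v * weighted q (n * lam) (jouk v) - v ^ (n + 1) * cHol (weighted q (n * lam)) n v := by
    rw [← h4, h3]; ring
  rw [hk]
  have hA : (v * (2 * (dCoef n : ℂ) * aHol q n v * exp (I * (n * lam : ℝ) * v / 2))) * (qSer j (bigV lam 1 v ^ 2) / dCoef n)
      = 2 * (q.eval (jouk v) * exp (I * (n * lam : ℝ) * jouk v / 2)) * bigV lam 1 v ^ n * qSer j (bigV lam 1 v ^ 2) := by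
    have : q.eval (jouk v) * exp (I * (n * lam : ℝ) * jouk v / 2) * bigV lam 1 v ^ n = v * aHol q n v * exp (I * (n * lam : ℝ) * v / 2) := by
      linear_combination q.eval (jouk v) * h6 + exp (I * (n * lam : ℝ) * v / 2) * h5
    have hdd : (dCoef n : ℂ) * (dCoef n : ℂ)⁻¹ = 1 := mul_inv_cancel₀ hd
    rw [div_eq_mul_inv (qSer j (bigV lam 1 v ^ 2))]
    linear_combination -2 * qSer j (bigV lam 1 v ^ 2) * this
      + 2 * v * aHol q n v * exp (I * (n * lam : ℝ) * v / 2) * qSer j (bigV lam 1 v ^ 2) * hdd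
  have hC : (v * ((gCoef n : ℂ) * cHol (weighted q (n * lam)) n v * exp (-(I * (n * lam : ℝ) * v / 2)))) * (pTil j (bigV lam 1 v ^ 2) / gCoef n)
      = v * cHol (weighted q (n * lam)) n v * exp (-(I * (n * lam : ℝ) * v / 2)) * pTil j (bigV lam 1 v ^ 2) := by
    field_simp
  rw [mul_assoc (bigV lam 1 v ^ (j + 1)), hA, mul_assoc (_ * _ * bigV lam 1 v ^ n), hC]
  -- with the transcendental factors abstracted, the claim is a polynomial identity
  generalize legRec 1 (jouk (bigV lam 1 v)) (jouk (bigV lam 1 v)) j = P at *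
  generalize legRec 0 1 (jouk (bigV lam 1 v)) j = W at *
  generalize exp (-(I * (n * lam : ℝ) * jouk v / 2)) = e1 at *
  generalize exp ((I * (n * lam : ℝ) * jouk v / 2)) = e2 at *
  generalize exp (-(I * (n * lam : ℝ) * v / 2)) = e3 at *
  generalize cHol (weighted q (n * lam)) n v = c at *
  rw [pow_succ v n]
  linear_combination 2 * (q.eval (jouk v) * e2) * bigV lam 1 v ^ n * h1 + 2 * P * logRatio v * bigV lam 1 v ^ n * h8
    - P * v * c * bigV lam 1 v ^ n * h9 - v * c * e3 * bigV lam 1 v ^ n * bigV lam 1 v ^ n * h2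

/-! ### Non-degeneracy of the moment problem -/

theorem norm_bigV_le {lam r t : ℝ} (hl : 0 ≤ lam) (ht0 : 0 ≤ t) (ht1 : t ≤ 1) {v : ℂ}
    (hv : ‖v‖ = Real.exp (-r)) : ‖bigV lam t v‖ ≤ Real.exp (-r + lam / 2 * Real.cosh r) := by
  have h1 : ‖etaF lam v‖ ≤ lam / 2 * Real.cosh r := by
    have h2 : ‖v - v⁻¹‖ ≤ Real.exp (-r) + Real.exp r := by
      refine (norm_sub_le _ _).trans ?_
      rw [norm_inv, hv, ← Real.exp_neg, neg_neg]
    rw [etaF, norm_div, norm_mul, norm_mul, norm_I, norm_real, Real.norm_of_nonneg hl, Real.cosh_eq, norm_ofNat]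
    have := mul_le_mul_of_nonneg_left h2 hl
    linarith
  rw [bigV, norm_mul, hv, norm_exp, ← Real.exp_add]
  refine Real.exp_le_exp.2 (add_le_add_right ?_ _)
  refine (re_le_norm _).trans ?_
  rw [norm_mul, norm_real, Real.norm_of_nonneg ht0]
  nlinarith [norm_nonneg (etaF lam v)]

theorem differentiableOn_logRatio : DifferentiableOn ℂ logRatio (ball 0 1) := by
  intro v hv
  rw [mem_ball_zero_iff] at hv
  have h1 : 1 + v ∈ slitPlane := mem_slitPlane_of_norm_lt_one hv
  have h2 : 1 - v ∈ slitPlane := by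
    rw [sub_eq_add_neg]; exact mem_slitPlane_of_norm_lt_one (by rwa [norm_neg])
  unfold logRatio
  exact (((differentiableAt_id.const_add 1).clog h1).sub ((differentiableAt_id.const_sub 1).clog h2)).differentiableWithinAt

theorem exists_bound {r ρ lam : ℝ} (hr : 0 < r) (hrρ : r < ρ) (hl : 0 ≤ lam) (hρ : lam / 2 * Real.sinh ρ < ρ) :
    ∃ M : ℝ, 0 < M ∧ ∀ v ∈ sphere (0 : ℂ) (Real.exp (-r)), ‖exp (logRatio v / 2)‖ ≤ M ∧
      ‖exp (-(logRatio v / 2))‖ ≤ M ∧ ‖exp (mFun lam v / 2)‖ ≤ M ∧ ‖exp (-(mFun lam v / 2))‖ ≤ M := by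
  have hR1 : Real.exp (-r) < 1 := by rw [Real.exp_lt_one_iff]; linarith
  have hsph : sphere (0 : ℂ) (Real.exp (-r)) ⊆ ball 0 1 := fun w hw => by
    rw [mem_sphere] at hw; rw [mem_ball, hw]; exact hR1
  have hann : sphere (0 : ℂ) (Real.exp (-r)) ⊆ annU ρ := by
    intro v hv
    rw [mem_sphere_zero_iff_norm] at hv
    exact ⟨by rw [hv]; exact Real.exp_lt_exp.2 (by linarith), by rw [hv]; exact Real.exp_lt_exp.2 (by linarith)⟩
  have c1 := ((differentiableOn_logRatio.div_const 2).continuousOn.mono hsph)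
  have c2 := (((differentiableOn_mFun hl (hr.trans hrρ) hρ).div_const 2).continuousOn.mono hann)
  have hK := isCompact_sphere (0 : ℂ) (Real.exp (-r))
  obtain ⟨M1, h1⟩ := hK.exists_bound_of_continuousOn c1.cexp
  obtain ⟨M2, h2⟩ := hK.exists_bound_of_continuousOn c1.neg.cexp
  obtain ⟨M3, h3⟩ := hK.exists_bound_of_continuousOn c2.cexp
  obtain ⟨M4, h4⟩ := hK.exists_bound_of_continuousOn c2.neg.cexp
  refine ⟨1 + |M1| + |M2| + |M3| + |M4|, by positivity, fun v hv => ⟨(h1 v hv).trans ?_, (h2 v hv).trans ?_,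
    (h3 v hv).trans ?_, (h4 v hv).trans ?_⟩⟩ <;>
  linarith [le_abs_self M1, le_abs_self M2, le_abs_self M3, le_abs_self M4, abs_nonneg M1, abs_nonneg M2,
    abs_nonneg M3, abs_nonneg M4]

/-- The functions `X_{n-1} ± X_n`, multiplied by `e^{∓m/2}`, satisfy the hypotheses of `absorb` on
`|v| = e^{-r}`, whence `q` vanishes at the image of this circle under the Joukowski map. -/
theorem nondegenerate {lam r ρ : ℝ} (hl : 0 ≤ lam) (hr : 0 < r) (hrc : lam / 2 * Real.cosh r < r)
    (hrρ : r < ρ) (hρ : lam / 2 * Real.sinh ρ < ρ) :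
    ∃ N : ℕ, ∀ n ≥ N, ∀ q : Polynomial ℂ, q.degree < n →
      (∀ k < n, ∫ x in (-1 : ℝ)..1, weighted q (n * lam : ℝ) x * (x : ℂ) ^ k = 0) → q = 0 := by
  obtain ⟨M, hM0, hM⟩ := exists_bound hr hrρ hl hρ
  set V0 := Real.exp (-r + lam / 2 * Real.cosh r) with hV0
  have hV1 : V0 < 1 := by rw [hV0, Real.exp_lt_one_iff]; linarith
  have hV0' : 0 ≤ V0 := (Real.exp_pos _).le
  -- the errors below carry the factor `2 η M`, and `absorb` needs `(2 η M) M ≤ 1/8`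
  set η : ℝ := 1 / (16 * M ^ 2) with hη
  have hηpos : 0 < η := by positivity
  obtain ⟨N, hN⟩ := eventually_atTop.1 (((asymp_q 0 zero_le_one hV0' hV1 hηpos).and
    (asymp_q 1 le_rfl hV0' hV1 hηpos)).and ((asymp_p 0 zero_le_one hV0' hV1 hηpos).and
    (asymp_p 1 le_rfl hV0' hV1 hηpos)))
  refine ⟨N + 1, fun n hn q hq horth => ?_⟩
  obtain ⟨m, rfl⟩ : ∃ m, n = m + 1 := ⟨n - 1, by omega⟩
  obtain ⟨⟨hq0, hq1⟩, hp0, hp1⟩ := hN m (by omega)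
  rw [add_zero] at *
  have hρ0 : 0 < ρ := hr.trans hrρ
  set R := Real.exp (-r) with hR
  have hRpos : 0 < R := Real.exp_pos _
  have hR1 : R < 1 := by rw [hR, Real.exp_lt_one_iff]; linarith
  set X := innerX lam ((m + 1 : ℕ) * lam) q with hX
  set A := outA q ((m + 1 : ℕ) * lam) (m + 1) with hA
  set C := outC q ((m + 1 : ℕ) * lam) (m + 1) with hC
  have dX : ∀ j, DifferentiableOn ℂ (X j) (annU ρ) := differentiableOn_innerX _ hl hρ0 hρ q
  have sX : ∀ j v, X j v⁻¹ = X j v := innerX_inv lam _ q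
  have dm := differentiableOn_mFun hl hρ0 hρ
  have hZp : IsInner R (fun v => (X m v + X (m + 1) v) * exp (-(mFun lam v / 2))) := by
    refine isInner_of_annU hrρ (((dX _).add (dX _)).mul (dm.div_const 2).neg.cexp) fun v => ?_
    simp only [sX, mFun_inv]
  have hZm : IsInner R (fun v => (X m v - X (m + 1) v) * exp (mFun lam v / 2)) := by
    refine isInner_of_annU hrρ (((dX _).sub (dX _)).mul (dm.div_const 2).cexp) fun v => ?_
    simp only [sX, mFun_inv]
  have hdA : DifferentiableOn ℂ A (ball 0 1) := by
    have hd := (((differentiable_aHol q (m + 1)).const_mul (2 * (dCoef (m + 1) : ℂ))).mul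
      ((differentiable_id.const_mul (I * (((m + 1 : ℕ) * lam : ℝ) : ℂ))).div_const 2).cexp)
    exact hd.differentiableOn
  have hdC : DifferentiableOn ℂ C (ball 0 1) := by
    have hd := ((differentiableOn_cHol (differentiable_weighted q ((m + 1 : ℕ) * lam)).continuous (m + 1)).const_mul
      ((gCoef (m + 1) : ℂ))).mul
      ((differentiable_id.const_mul (I * (((m + 1 : ℕ) * lam : ℝ) : ℂ))).div_const 2).neg.cexp.differentiableOn
    exact hd
  have hdu : DifferentiableOn ℂ (fun v => logRatio v / 2) (ball 0 1) :=
    differentiableOn_logRatio.div_const 2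
  have hann : ∀ v ∈ sphere (0 : ℂ) R, v ∈ annU ρ := by
    intro v hv
    rw [mem_sphere_zero_iff_norm] at hv
    exact ⟨by rw [hv]; exact Real.exp_lt_exp.2 (by linarith), by rw [hv]; exact Real.exp_lt_exp.2 (by linarith)⟩
  have hbig : ∀ v ∈ sphere (0 : ℂ) R, ∀ t ∈ Icc (0 : ℝ) 1, ‖bigV lam t v‖ ≤ V0 := fun v hv t ht =>
    norm_bigV_le hl ht.1 ht.2 (mem_sphere_zero_iff_norm.1 hv)
  -- expansion of the two symmetric functions on the circle
  have hexp : ∀ v ∈ sphere (0 : ℂ) R, ∃ a b c d : ℂ, ‖a‖ ≤ η ∧ ‖b‖ ≤ η ∧ ‖c‖ ≤ η ∧ ‖d‖ ≤ η ∧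
      X m v = (v * A v) * (tau (bigV lam 1 v) + a) - bigV lam 1 v * (v * C v) * (tau (bigV lam 1 v) + b) ∧
      X (m + 1) v = bigV lam 1 v * (v * A v) * (tau (bigV lam 1 v) + c) - (v * C v) * (tau (bigV lam 1 v) + d) := by
    intro v hv
    have hVn := hbig v hv 1 (by simp)
    have hne : bigV lam 1 v ≠ 0 := bigV_ne_zero (annU_ne_zero (hann v hv))
    have e := innerX_eq hl hρ0 hρ hq horth (hann v hv) (fun t ht => (hbig v hv t ht).trans_lt hV1)
    refine ⟨_, _, _, _, hq0 _ hVn, hp0 _ hVn, hq1 _ hVn, hp1 _ hVn, ?_, ?_⟩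
    · refine mul_right_cancel₀ (pow_ne_zero (m + 1) hne) ((e m).trans ?_)
      simp only [add_sub_cancel]
      rw [pow_succ _ m, inv_pow, hA, hC]
      field_simp
    · refine mul_right_cancel₀ (pow_ne_zero (m + 1) hne) ((e (m + 1)).trans ?_)
      simp only [add_sub_cancel]
      rw [inv_pow, pow_succ _ (m + 1), hA, hC]
      field_simp
  have hsmall : ∀ v ∈ sphere (0 : ℂ) R, ∀ a b c d : ℂ, ‖a‖ ≤ η → ‖b‖ ≤ η → ‖c‖ ≤ η → ‖d‖ ≤ η →
      ‖((v * A v) * a - bigV lam 1 v * (v * C v) * b) + (bigV lam 1 v * (v * A v) * c - (v * C v) * d)‖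
        ≤ 2 * η * (‖v * A v‖ + ‖v * C v‖) := by
    intro v hv a b c d ha hb hc hd
    have hVn : ‖bigV lam 1 v‖ ≤ 1 := (hbig v hv 1 (by simp)).trans hV1.le
    have e1 : ‖v * A v * a‖ ≤ ‖v * A v‖ * η := by rw [norm_mul]; gcongr
    have e2 : ‖bigV lam 1 v * (v * C v) * b‖ ≤ 1 * ‖v * C v‖ * η := by rw [norm_mul, norm_mul (bigV lam 1 v)]; gcongr
    have e3 : ‖bigV lam 1 v * (v * A v) * c‖ ≤ 1 * ‖v * A v‖ * η := by rw [norm_mul, norm_mul (bigV lam 1 v)]; gcongr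
    have e4 : ‖v * C v * d‖ ≤ ‖v * C v‖ * η := by rw [norm_mul]; gcongr
    have e5 := norm_add_le (v * A v * a - bigV lam 1 v * (v * C v) * b) (bigV lam 1 v * (v * A v) * c - v * C v * d)
    have e6 := norm_sub_le (v * A v * a) (bigV lam 1 v * (v * C v) * b)
    have e7 := norm_sub_le (bigV lam 1 v * (v * A v) * c) (v * C v * d)
    linarith
  have hEp : ∀ v ∈ sphere (0 : ℂ) R, ‖(X m v + X (m + 1) v) * exp (-(mFun lam v / 2))
      - v * (exp (logRatio v / 2) * (A v - C v))‖ ≤ 2 * η * M * (‖v * A v‖ + ‖v * C v‖) := by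
    intro v hv
    obtain ⟨a, b, c, d, ha, hb, hc, hd, e1, e2⟩ := hexp v hv
    have e3 := hsmall v hv a b c d ha hb hc hd
    have hVn := (hbig v hv 1 (by simp)).trans_lt hV1
    have e4 := mFun_eq hl hρ0 hρ (hann v hv) (fun t ht => (hbig v hv t ht).trans_lt hV1)
    have e5 : exp (logRatio v / 2) = tau (bigV lam 1 v) * (1 + bigV lam 1 v) * exp (-(mFun lam v / 2)) := by
      rw [tau_mul_one_add hVn, ← exp_add, e4]; congr 1; ring
    rw [e1, e2, e5]
    calc _ = ‖(((v * A v) * a - bigV lam 1 v * (v * C v) * b) + (bigV lam 1 v * (v * A v) * c - (v * C v) * d))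
          * exp (-(mFun lam v / 2))‖ := by congr 1; ring
      _ ≤ 2 * η * (‖v * A v‖ + ‖v * C v‖) * M := by
        rw [norm_mul]
        exact mul_le_mul e3 (hM v hv).2.2.2 (norm_nonneg _) (by positivity)
      _ = _ := by ring
  have hEm : ∀ v ∈ sphere (0 : ℂ) R, ‖(X m v - X (m + 1) v) * exp (mFun lam v / 2)
      - v * (exp (-(logRatio v / 2)) * (A v + C v))‖ ≤ 2 * η * M * (‖v * A v‖ + ‖v * C v‖) := by
    intro v hv
    obtain ⟨a, b, c, d, ha, hb, hc, hd, e1, e2⟩ := hexp v hv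
    have e3 := hsmall v hv a b (-c) (-d) ha hb (by rwa [norm_neg]) (by rwa [norm_neg])
    have hVn := (hbig v hv 1 (by simp)).trans_lt hV1
    have e4 := mFun_eq hl hρ0 hρ (hann v hv) (fun t ht => (hbig v hv t ht).trans_lt hV1)
    have e5 : exp (-(logRatio v / 2)) = tau (bigV lam 1 v) * (1 - bigV lam 1 v) * exp (mFun lam v / 2) := by
      rw [tau_mul_one_sub hVn, ← exp_add, e4]; congr 1; ring
    rw [e1, e2, e5]
    calc _ = ‖(((v * A v) * a - bigV lam 1 v * (v * C v) * b) + (bigV lam 1 v * (v * A v) * (-c) - (v * C v) * (-d)))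
          * exp (mFun lam v / 2)‖ := by congr 1; ring
      _ ≤ 2 * η * (‖v * A v‖ + ‖v * C v‖) * M := by
        rw [norm_mul]
        exact mul_le_mul e3 (hM v hv).2.2.1 (norm_nonneg _) (by positivity)
      _ = _ := by ring
  have hA0 : ∀ v ∈ sphere (0 : ℂ) R, A v = 0 := fun v hv =>
    absorb hRpos hR1 hZp hZm hdA hdC hdu (by positivity) (fun v hv => (hM v hv).1) (fun v hv => (hM v hv).2.1)
      hEp hEm (by rw [hη]; field_simp; norm_num) hv
  have hroot : ∀ v ∈ sphere (0 : ℂ) R, q.eval (jouk v) = 0 := by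
    intro v hv
    have hv0 := annU_ne_zero (hann v hv)
    have e := hA0 v hv
    rw [hA, outA] at e
    have hd : (dCoef (m + 1) : ℂ) ≠ 0 := by exact_mod_cast (dCoef_pos _).ne'
    have e2 : aHol q (m + 1) v = 0 := by simpa [hd, exp_ne_zero] using e
    have e3 := eval_eq_aHol hq hv0
    rw [e2, mul_zero] at e3
    exact (mul_eq_zero.1 e3).resolve_right (pow_ne_zero _ hv0)
  have hinj : InjOn jouk (sphere (0 : ℂ) R) := by
    intro v hv w hw hvw
    have hv0 := annU_ne_zero (hann v hv)
    have hw0 := annU_ne_zero (hann w hw)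
    rw [mem_sphere_zero_iff_norm] at hv hw
    rw [jouk, jouk] at hvw
    have e1 : (v - w) * (1 - v * w) = 0 := by
      field_simp at hvw
      linear_combination -hvw
    refine sub_eq_zero.1 ((mul_eq_zero.1 e1).resolve_right ?_)
    refine one_sub_ne_zero' ?_
    rw [norm_mul, hv, hw]
    nlinarith
  have hinf : (sphere (0 : ℂ) R).Infinite := by
    have h1 := injOn_circleMap_of_abs_sub_le' (a := 0) (b := 2 * Real.pi) (c := 0) hRpos.ne' (by simp)
    refine ((infinite_image_iff h1).2 (Ico_infinite Real.two_pi_pos)).mono ?_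
    rintro _ ⟨t, -, rfl⟩
    exact circleMap_mem_sphere 0 hRpos.le t
  exact Polynomial.eq_zero_of_infinite_isRoot q (((infinite_image_iff hinj).2 hinf).mono
    (by rintro _ ⟨v, hv, rfl⟩; exact hroot v hv))

/-! ### The radii, linear algebra and the conclusion -/

/-- With `r = √(λ₀² + 4)/2` the equation `h λ₀ = 0` reads `e^r = (2 + 2r)/λ₀`, which is equivalent to
`(λ₀/2) cosh r = r`. The radius `ρ` is any number slightly larger than `r`. -/
theorem exists_radii {lam lam0 : ℝ} (hlam0pos : 0 < lam0) (hlam0 : h lam0 = 0) (hnonneg : 0 ≤ lam) (hlt : lam < lam0) :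
    ∃ r ρ : ℝ, 0 < r ∧ lam / 2 * Real.cosh r < r ∧ r < ρ ∧ lam / 2 * Real.sinh ρ < ρ := by
  set r := Real.sqrt (lam0 ^ 2 + 4) / 2 with hr
  have hs : Real.sqrt (lam0 ^ 2 + 4) = 2 * r := by rw [hr]; ring
  have hr0 : 0 < r := by positivity
  have hsq : 4 * r ^ 2 = lam0 ^ 2 + 4 := by
    have := Real.sq_sqrt (show 0 ≤ lam0 ^ 2 + 4 by positivity)
    rw [hs] at this; linarith
  have hlog : Real.log ((2 + 2 * r) / lam0) = r := by
    rw [h, hs] at hlam0; linarith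
  have hexp : Real.exp r = (2 + 2 * r) / lam0 := by
    rw [← hlog, Real.exp_log (by positivity), hlog]
  have hcosh : lam0 / 2 * Real.cosh r = r := by
    rw [Real.cosh_eq, Real.exp_neg, hexp]
    field_simp
    nlinarith
  have h1 : lam / 2 * Real.cosh r < r := by
    nlinarith [Real.cosh_pos r]
  have h2 : lam / 2 * Real.sinh r < r := by
    nlinarith [Real.sinh_lt_cosh r]
  have hc : ∀ᶠ x in 𝓝 r, lam / 2 * Real.sinh x < x :=
    (continuous_const.mul Real.continuous_sinh).continuousAt.eventually_lt continuousAt_id h2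
  obtain ⟨ρ, hρ, hρ'⟩ := ((hc.filter_mono nhdsWithin_le_nhds).and (self_mem_nhdsWithin (s := Ioi r))).exists
  exact ⟨r, ρ, hr0, h1, hρ', hρ⟩

/-- The first `n` moments of a polynomial against `e^{iωx}` on `[-1,1]`. -/
noncomputable def momentMap (ω : ℝ) (n : ℕ) : Polynomial ℂ →ₗ[ℂ] (Fin n → ℂ) where
  toFun p k := ∫ x in (-1 : ℝ)..1, p.eval (x : ℂ) * (x : ℂ) ^ (k : ℕ) * exp (I * ω * x)
  map_add' p q := by
    ext k
    simp only [Polynomial.eval_add, add_mul, Pi.add_apply]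
    exact intervalIntegral.integral_add (Continuous.intervalIntegrable (by fun_prop) _ _)
      (Continuous.intervalIntegrable (by fun_prop) _ _)
  map_smul' c p := by
    ext k
    simp only [Polynomial.eval_smul, smul_eq_mul, mul_assoc, Pi.smul_apply, RingHom.id_apply]
    exact intervalIntegral.integral_const_mul _ _

/-- A linear map between spaces of dimension `n` that is injective is bijective; applied to the moments
of polynomials of degree `< n`, this solves `∫ (x^n + q) x^k e^{iωx} dx = 0` uniquely for `q`. -/
theorem existsUnique_of_nondegenerate {ω : ℝ} {n : ℕ}
    (hnd : ∀ q : Polynomial ℂ, q.degree < n → momentMap ω n q = 0 → q = 0) :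
    ∃! p : Polynomial ℂ, IsOrthoPoly ω n p := by
  have hiff : ∀ p : Polynomial ℂ, IsOrthoPoly ω n p ↔ p.Monic ∧ p.natDegree = n ∧ momentMap ω n p = 0 := by
    intro p
    refine and_congr_right fun _ => and_congr_right fun _ => ⟨fun hp => ?_, fun hp k hk => congr_fun hp ⟨k, hk⟩⟩
    ext k
    exact hp k k.2
  simp only [hiff]
  set T : Polynomial.degreeLT ℂ n →ₗ[ℂ] (Fin n → ℂ) := (momentMap ω n).comp (Submodule.subtype _) with hT
  have hTinj : Function.Injective T := by
    rw [← LinearMap.ker_eq_bot, LinearMap.ker_eq_bot']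
    rintro ⟨q, hq⟩ h0
    exact Subtype.ext (hnd q (Polynomial.mem_degreeLT.1 hq) h0)
  have : FiniteDimensional ℂ (Polynomial.degreeLT ℂ n) := (Polynomial.degreeLTEquiv ℂ n).symm.finiteDimensional
  have hTsurj : Function.Surjective T :=
    (LinearMap.injective_iff_surjective_of_finrank_eq_finrank
      (Polynomial.degreeLTEquiv ℂ n).finrank_eq).1 hTinj
  obtain ⟨⟨q, hq⟩, hqT⟩ := hTsurj (-momentMap ω n (Polynomial.X ^ n))
  rw [Polynomial.mem_degreeLT] at hq
  have hqT' : momentMap ω n q = -momentMap ω n (Polynomial.X ^ n) := hqT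
  refine ⟨Polynomial.X ^ n + q, ⟨Polynomial.monic_X_pow_add hq, ?_, ?_⟩, ?_⟩
  · exact Polynomial.natDegree_eq_of_degree_eq_some (by
      rw [Polynomial.degree_add_eq_left_of_degree_lt (by rwa [Polynomial.degree_X_pow]), Polynomial.degree_X_pow])
  · rw [map_add, hqT', add_neg_cancel]
  · rintro p ⟨hm, hd, h0⟩
    have hpd : p.degree = n := by rw [Polynomial.degree_eq_natDegree hm.ne_zero, hd]
    have hlt : (p - Polynomial.X ^ n).degree < (n : WithBot ℕ) := by
      have := Polynomial.degree_sub_lt_left (p := p) (q := Polynomial.X ^ n) (by rw [hpd, Polynomial.degree_X_pow]) hm.ne_zero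
        (by rw [hm.leadingCoeff, (Polynomial.monic_X_pow n).leadingCoeff])
      rwa [hpd] at this
    have hz := hnd (p - Polynomial.X ^ n - q) ((Polynomial.degree_sub_le _ _).trans_lt (max_lt hlt hq))
      (by rw [map_sub, map_sub, h0, hqT']; simp)
    rwa [sub_sub, sub_eq_zero] at hz

end

/-- For `0 ≤ λ < λ₀` and all sufficiently large `n`, the monic orthogonal polynomial of
degree `n` for the weight `e^{i n λ x}` on `[−1,1]` exists and is unique. -/
theorem stmt8 (lam lam0 : ℝ) (hlam0pos : 0 < lam0) (hlam0 : h lam0 = 0)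
    (hnonneg : 0 ≤ lam) (hlt : lam < lam0) :
    ∃ N : ℕ, ∀ n ≥ N, ∃! p : Polynomial ℂ, IsOrthoPoly (n * lam) n p := by
  obtain ⟨r, ρ, hr, hrc, hrρ, hρ⟩ := exists_radii hlam0pos hlam0 hnonneg hlt
  obtain ⟨N, hN⟩ := nondegenerate hnonneg hr hrc hrρ hρ
  refine ⟨N, fun n hn => existsUnique_of_nondegenerate fun q hq h0 => hN n hn q hq fun k hk => ?_⟩
  rw [← show (0 : Fin n → ℂ) ⟨k, hk⟩ = 0 from rfl, ← h0]
  refine intervalIntegral.integral_congr fun x _ => ?_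
  simp only [weighted]
  ring
end
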